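/- arXiv:2401.10086 — 2 statements merged into one kernel-verified Lean document; each statement's English description precedes it below -/
import Mathlib

section
/- Let n ≥ 3 be an integer. For every ε > 0 there exists a constant C = C(n, ε) such that for all real H ≥ 2 and all monic polynomials f ∈ ℚ[X] of degree n, the number of n×n matrices with all entries in F(H) whose characteristic polynomial equals f is at most C·H^{n²+ε}. -/
/-- The set of rationals `a/b` in lowest terms with `|a| ≤ H` and `1 ≤ b ≤ H`. -/
def Farey (H : ℝ) : Set ℚ := {x : ℚ | |(x.num : ℝ)| ≤ H ∧ (x.den : ℝ) ≤ H}

lemma rf_divisor_bound (δ : ℝ) (hδ : 0 < δ) :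
    ∃ C : ℝ, 1 ≤ C ∧ ∀ n : ℕ, n ≠ 0 → (n.divisors.card : ℝ) ≤ C * (n : ℝ) ^ δ := by
  have hl : 0 < Real.log 2 := Real.log_pos (by norm_num)
  set c : ℝ := 1 + 1 / (δ * Real.log 2) with hc
  have hc1 : 1 ≤ c := by
    have : 0 < 1 / (δ * Real.log 2) := by positivity
    linarith
  set B : ℕ := ⌈(2 : ℝ) ^ (1 / δ)⌉₊ with hB
  refine ⟨c ^ B, one_le_pow₀ hc1, ?_⟩
  intro n hn
  have key : ∀ p ∈ n.primeFactors, ((n.factorization p + 1 : ℕ) : ℝ) ≤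
      (if p < B then c else 1) * ((p : ℝ) ^ (n.factorization p)) ^ δ := by
    intro p hp
    have hpp := Nat.prime_of_mem_primeFactors hp
    set e := n.factorization p
    have h2p : (2 : ℝ) ≤ p := by exact_mod_cast hpp.two_le
    have hsw : ((p : ℝ) ^ e) ^ δ = ((p : ℝ) ^ δ) ^ e := by
      rw [← Real.rpow_natCast, ← Real.rpow_mul (by positivity), mul_comm, Real.rpow_mul (by positivity),
        Real.rpow_natCast]
    rw [hsw]
    split_ifs with h
    · have h1 : ((2 : ℝ) ^ δ) ^ e ≤ ((p : ℝ) ^ δ) ^ e := by gcongr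
      have h2 : 1 + δ * Real.log 2 * e ≤ ((2 : ℝ) ^ δ) ^ e := by
        rw [Real.rpow_def_of_pos (by norm_num), ← Real.exp_nat_mul]
        have := Real.add_one_le_exp ((e : ℝ) * (Real.log 2 * δ))
        linarith
      have h3 : ((e + 1 : ℕ) : ℝ) ≤ c * (1 + δ * Real.log 2 * e) := by
        have hx : 0 < δ * Real.log 2 := by positivity
        have h4 : c * (1 + δ * Real.log 2 * e) = 1 + 1 / (δ * Real.log 2) + δ * Real.log 2 * e + e := by
          rw [hc]; field_simp; ring
        rw [h4]; push_cast
        have : 0 < 1 / (δ * Real.log 2) := by positivity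
        have : 0 ≤ δ * Real.log 2 * e := by positivity
        linarith
      calc _ ≤ _ := h3
        _ ≤ _ := by gcongr; linarith
    · have h1 : (2 : ℝ) ≤ (p : ℝ) ^ δ := by
        have : (2 : ℝ) ^ (1 / δ) ≤ p := (Nat.le_ceil _).trans (by exact_mod_cast not_lt.mp h)
        calc (2 : ℝ) = ((2 : ℝ) ^ (1 / δ)) ^ δ := by
              rw [← Real.rpow_mul (by norm_num)]; field_simp; simp
          _ ≤ _ := by gcongr
      calc ((e + 1 : ℕ) : ℝ) ≤ (2 : ℝ) ^ e := by exact_mod_cast Nat.lt_two_pow_self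
        _ ≤ ((p : ℝ) ^ δ) ^ e := by gcongr
        _ = _ := by ring
  have hprod : (∏ p ∈ n.primeFactors, ((p : ℝ) ^ (n.factorization p)) ^ δ) = (n : ℝ) ^ δ := by
    rw [Real.finsetProd_rpow _ _ (fun i _ => by positivity)]
    congr 1
    have := Nat.prod_factorization_pow_eq_self hn
    conv_rhs => rw [← this]
    rw [Finsupp.prod]; push_cast; rfl
  rw [Nat.card_divisors hn]
  push_cast
  calc (∏ p ∈ n.primeFactors, ((n.factorization p : ℝ) + 1))
      ≤ ∏ p ∈ n.primeFactors, ((if p < B then c else 1) * ((p : ℝ) ^ (n.factorization p)) ^ δ) := by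
        apply Finset.prod_le_prod
        · intros; positivity
        · intro p hp; exact_mod_cast key p hp
    _ = (∏ p ∈ n.primeFactors, (if p < B then c else 1)) * (n : ℝ) ^ δ := by
        rw [Finset.prod_mul_distrib, hprod]
    _ ≤ c ^ B * (n : ℝ) ^ δ := by
        gcongr
        rw [← Finset.prod_filter, Finset.prod_const]
        apply pow_le_pow_right₀ hc1
        calc _ ≤ (Finset.range B).card := Finset.card_le_card (by intro p; simp)
          _ = B := by simp

lemma rf_residue (K : ℕ) (d : ℕ) (hd : 0 < d) (hdK : d ≤ K) (S : Finset ℤ)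
    (hS : S ⊆ Finset.Icc (-(K : ℤ)) K) (h : ∀ x ∈ S, ∀ y ∈ S, (d : ℤ) ∣ x - y) :
    (S.card : ℝ) ≤ 4 * K / d := by
  rcases S.eq_empty_or_nonempty with rfl | ⟨r, hr⟩
  · simp; positivity
  have hsub : S ⊆ (Finset.Ioc (-(K : ℤ) - 1) K).filter (fun x => x ≡ r [ZMOD d]) := by
    intro x hx
    have h1 := Finset.mem_Icc.1 (hS hx)
    rw [Finset.mem_filter, Finset.mem_Ioc]
    exact ⟨⟨by omega, h1.2⟩, (Int.modEq_iff_dvd.2 (h r hr x hx))⟩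
  have h1 := Finset.card_le_card hsub
  have h2 := Int.Ioc_filter_modEq_card (-(K : ℤ) - 1) K (r := (d : ℤ)) (by exact_mod_cast hd) r
  have h3 : (S.card : ℤ) ≤ max (⌊(((K : ℤ) - r : ℚ)) / ((d : ℤ) : ℚ)⌋ - ⌊(((-(K : ℤ) - 1 : ℤ) : ℚ) - r) / ((d : ℤ) : ℚ)⌋) 0 := by
    rw [← h2]
    exact_mod_cast h1
  have hdq : (0 : ℚ) < d := by exact_mod_cast hd
  have hdK' : (d : ℚ) ≤ K := by exact_mod_cast hdK
  have h1d : (1 : ℚ) ≤ d := by exact_mod_cast hd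
  have h4 : (S.card : ℚ) ≤ 4 * K / d := by
    have h5 : (S.card : ℚ) ≤ max ((⌊(((K : ℤ) - r : ℚ)) / ((d : ℤ) : ℚ)⌋ : ℚ) - ⌊(((-(K : ℤ) - 1 : ℤ) : ℚ) - r) / ((d : ℤ) : ℚ)⌋) 0 := by
      exact_mod_cast h3
    refine h5.trans (max_le ?_ (by positivity))
    have h6 := Int.floor_le ((((K : ℤ) - r : ℚ)) / ((d : ℤ) : ℚ))
    have h7 := Int.lt_floor_add_one ((((-(K : ℤ) - 1 : ℤ) : ℚ) - r) / ((d : ℤ) : ℚ))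
    have h8 : (((K : ℤ) - r : ℚ)) / ((d : ℤ) : ℚ) - (((-(K : ℤ) - 1 : ℤ) : ℚ) - r) / ((d : ℤ) : ℚ) + 1 ≤ 4 * K / d := by
      push_cast
      rw [← sub_div, div_add_one hdq.ne']
      gcongr
      linarith
    linarith
  have h9 : ((S.card : ℚ) : ℝ) ≤ ((4 * K / d : ℚ) : ℝ) := by exact_mod_cast h4
  push_cast at h9
  exact h9

lemma rf_gcd_sum (K L : ℕ) (hL : L ≠ 0) :
    ∑ D ∈ Finset.Icc 1 K, ((Nat.gcd D L : ℕ) : ℝ) / D ≤ L.divisors.card * (1 + Real.log K) := by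
  have hH : ∑ D ∈ Finset.Icc 1 K, (1 : ℝ) / D ≤ 1 + Real.log K := by
    have := harmonic_le_one_add_log K
    rw [harmonic_eq_sum_Icc] at this
    push_cast at this
    simpa using this
  calc ∑ D ∈ Finset.Icc 1 K, ((Nat.gcd D L : ℕ) : ℝ) / D
      ≤ ∑ D ∈ Finset.Icc 1 K, ∑ g ∈ L.divisors, (if g ∣ D then (g : ℝ) / D else 0) := by
        apply Finset.sum_le_sum
        intro D hD
        have hm : Nat.gcd D L ∈ L.divisors := Nat.mem_divisors.2 ⟨Nat.gcd_dvd_right _ _, hL⟩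
        have := Finset.single_le_sum (f := fun g : ℕ => (if g ∣ D then (g : ℝ) / D else 0))
          (fun i _ => by split_ifs <;> positivity) hm
        simpa [Nat.gcd_dvd_left] using this
    _ = ∑ g ∈ L.divisors, ∑ D ∈ Finset.Icc 1 K, (if g ∣ D then (g : ℝ) / D else 0) := Finset.sum_comm
    _ ≤ ∑ g ∈ L.divisors, (1 + Real.log K) := by
        apply Finset.sum_le_sum
        intro g hg
        have hg0 : 0 < g := Nat.pos_of_mem_divisors hg
        rw [← Finset.sum_filter]
        refine le_trans ?_ hH
        have himg : ∑ D ∈ (Finset.Icc 1 K).filter (g ∣ ·), (g : ℝ) / D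
            = ∑ E ∈ ((Finset.Icc 1 K).filter (g ∣ ·)).image (· / g), (1 : ℝ) / E := by
          rw [Finset.sum_image]
          · apply Finset.sum_congr rfl
            intro D hD
            obtain ⟨q, rfl⟩ := (Finset.mem_filter.1 hD).2
            have : (g : ℝ) ≠ 0 := by positivity
            rw [Nat.mul_div_cancel_left _ hg0]
            push_cast
            rw [div_mul_eq_div_div, div_self this]
          · intro a ha b hb hab
            obtain ⟨q, rfl⟩ := (Finset.mem_filter.1 ha).2
            obtain ⟨q', rfl⟩ := (Finset.mem_filter.1 hb).2
            simp only [Nat.mul_div_cancel_left _ hg0] at hab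
            rw [hab]
        rw [himg]
        apply Finset.sum_le_sum_of_subset_of_nonneg
        · intro E hE
          obtain ⟨D, hD, rfl⟩ := Finset.mem_image.1 hE
          obtain ⟨h1, q, rfl⟩ := Finset.mem_filter.1 hD
          rw [Finset.mem_Icc] at h1 ⊢
          simp only [Nat.mul_div_cancel_left _ hg0]
          exact ⟨Nat.pos_of_ne_zero (by rintro rfl; simp at h1), (Nat.le_mul_of_pos_left q hg0).trans h1.2⟩
        · intros; positivity
    _ = _ := by rw [Finset.sum_const, nsmul_eq_mul]

open Classical in
/-- tuples of fractions with sum congruent to `c` modulo `(1/L)ℤ` -/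
noncomputable def rfS (K m L : ℕ) (c : ℚ) : Finset (Fin m → ℤ × ℕ) :=
  (Fintype.piFinset (fun _ : Fin m => Finset.Icc (-(K : ℤ)) K ×ˢ Finset.Icc 1 K)).filter
    (fun p => ∃ z : ℤ, (L : ℚ) * ((∑ i, ((p i).1 : ℚ) / (p i).2) - c) = z)

lemma rf_mem (K m L : ℕ) (c : ℚ) (p : Fin m → ℤ × ℕ) : p ∈ rfS K m L c ↔
    (∀ i, ((-(K : ℤ) ≤ (p i).1 ∧ (p i).1 ≤ K) ∧ (1 ≤ (p i).2 ∧ (p i).2 ≤ K))) ∧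
    ∃ z : ℤ, (L : ℚ) * ((∑ i, ((p i).1 : ℚ) / (p i).2) - c) = z := by
  simp [rfS, Fintype.mem_piFinset]

open Classical in
lemma rf_step (K m L : ℕ) (c : ℚ) (hL : L ≠ 0) (R : ℝ) (hR : ∀ D ∈ Finset.Icc 1 K,
    ((rfS K m (Nat.lcm L D) c).card : ℝ) ≤ R) :
    ((rfS K (m + 1) L c).card : ℝ) ≤ 4 * K * (L.divisors.card * (1 + Real.log K)) * R := by
  rcases Nat.eq_zero_or_pos K with rfl | hK
  · have : rfS 0 (m + 1) L c = ∅ := by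
      apply Finset.eq_empty_of_forall_notMem
      intro p hp
      have := (rf_mem _ _ _ _ _).1 hp |>.1 0
      omega
    simp [this]
  have hR0 : 0 ≤ R := le_trans (by positivity) (hR 1 (Finset.mem_Icc.2 ⟨le_rfl, hK⟩))
  let U : ℕ → (Fin m → ℤ × ℕ) → Finset ℤ := fun D q => (Finset.Icc (-(K : ℤ)) K).filter
    (fun A => ∃ z : ℤ, (L : ℚ) * ((A : ℚ) / D + (∑ i, ((q i).1 : ℚ) / (q i).2) - c) = z)
  have hU : ∀ D ∈ Finset.Icc 1 K, ∀ q, ((U D q).card : ℝ) ≤ 4 * K * (((Nat.gcd D L : ℕ) : ℝ) / D) := by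
    intro D hD q
    rw [Finset.mem_Icc] at hD
    have hg : 0 < Nat.gcd D L := Nat.gcd_pos_of_pos_left _ hD.1
    obtain ⟨d, hd⟩ := Nat.gcd_dvd_left D L
    have hdpos : 0 < d := Nat.pos_of_ne_zero (by rintro rfl; omega)
    have hdK : d ≤ K := le_trans (by rw [hd]; exact Nat.le_mul_of_pos_left d hg) hD.2
    have := rf_residue K d hdpos hdK (U D q) (Finset.filter_subset _ _) ?_
    · refine this.trans (le_of_eq ?_)
      have h1 : (D : ℝ) = (Nat.gcd D L : ℕ) * d := by exact_mod_cast hd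
      have h2 : ((Nat.gcd D L : ℕ) : ℝ) ≠ 0 := by positivity
      rw [h1]
      field_simp
    · intro x hx y hy
      obtain ⟨z, hz⟩ := (Finset.mem_filter.1 hx).2
      obtain ⟨w, hw⟩ := (Finset.mem_filter.1 hy).2
      have hDq : (D : ℚ) ≠ 0 := by have := hD.1; positivity
      have h3 : (L : ℚ) * (x - y) = (z - w) * D := by
        rw [← hz, ← hw]; field_simp; ring
      have h4 : (L : ℤ) * (x - y) = (z - w) * D := by exact_mod_cast h3
      obtain ⟨l, hl⟩ := Nat.gcd_dvd_right D L
      have hcop : Nat.Coprime d l := by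
        have := Nat.coprime_div_gcd_div_gcd (m := D) (n := L) hg
        rwa [Nat.div_eq_of_eq_mul_right hg hd, Nat.div_eq_of_eq_mul_right hg hl] at this
      have h5 : (l : ℤ) * (x - y) = (z - w) * d := by
        have hg' : ((Nat.gcd D L : ℕ) : ℤ) ≠ 0 := by exact_mod_cast hg.ne'
        apply mul_left_cancel₀ hg'
        have e1 : (L : ℤ) = (Nat.gcd D L : ℕ) * l := by exact_mod_cast hl
        have e2 : (D : ℤ) = (Nat.gcd D L : ℕ) * d := by exact_mod_cast hd
        calc _ = ((Nat.gcd D L : ℕ) * l : ℤ) * (x - y) := by ring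
          _ = L * (x - y) := by rw [← e1]
          _ = (z - w) * D := h4
          _ = (z - w) * ((Nat.gcd D L : ℕ) * d : ℤ) := by rw [← e2]
          _ = _ := by ring
      have h6 : (d : ℤ) ∣ l * (x - y) := ⟨z - w, by rw [h5]; ring⟩
      exact (Int.isCoprime_iff_gcd_eq_one.2 (by simpa using hcop)).dvd_of_dvd_mul_left h6
  let T : Finset (Σ _ : ℕ, Σ _ : (Fin m → ℤ × ℕ), ℤ) :=
    (Finset.Icc 1 K).sigma (fun D => (rfS K m (Nat.lcm L D) c).sigma (fun q => U D q))
  have hcard : (rfS K (m + 1) L c).card ≤ T.card := by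
    apply Finset.card_le_card_of_injOn (fun p => ⟨(p 0).2, ⟨Fin.tail p, (p 0).1⟩⟩)
    · intro p hp
      obtain ⟨h1, z, hz⟩ := (rf_mem _ _ _ _ _).1 hp
      have h0 := h1 0
      rw [Fin.sum_univ_succ] at hz
      simp only [T, Finset.coe_sigma, Set.mem_sigma_iff, Finset.mem_coe]
      refine ⟨Finset.mem_Icc.2 h0.2, (rf_mem _ _ _ _ _).2 ⟨fun i => h1 i.succ, ?_⟩, ?_⟩
      · obtain ⟨u, hu⟩ := Nat.dvd_lcm_left L (p 0).2
        obtain ⟨v, hv⟩ := Nat.dvd_lcm_right L (p 0).2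
        refine ⟨u * z - v * (p 0).1, ?_⟩
        have hDq : ((p 0).2 : ℚ) ≠ 0 := by have := h0.2.1; positivity
        have hu' : ((Nat.lcm L (p 0).2 : ℕ) : ℚ) = L * u := by exact_mod_cast hu
        have hv' : ((Nat.lcm L (p 0).2 : ℕ) : ℚ) = (p 0).2 * v := by exact_mod_cast hv
        have e : ((Nat.lcm L (p 0).2 : ℕ) : ℚ) * ((∑ i, ((Fin.tail p i).1 : ℚ) / (Fin.tail p i).2) - c)
          = ((Nat.lcm L (p 0).2 : ℕ) : ℚ) * (((p 0).1 : ℚ) / (p 0).2 + (∑ i : Fin m, ((p i.succ).1 : ℚ) / (p i.succ).2) - c)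
            - ((Nat.lcm L (p 0).2 : ℕ) : ℚ) * (((p 0).1 : ℚ) / (p 0).2) := by
          simp only [Fin.tail]; ring
        rw [e]
        nth_rewrite 1 [hu']
        rw [hv']
        push_cast
        rw [← hz]
        field_simp
      · refine Finset.mem_filter.2 ⟨Finset.mem_Icc.2 h0.1, z, ?_⟩
        exact hz
    · intro p _ q _ hpq
      simp only [Sigma.mk.injEq, heq_eq_eq] at hpq
      obtain ⟨e1, e2, e3⟩ := hpq
      rw [← Fin.cons_self_tail p, ← Fin.cons_self_tail q, e2, Prod.ext e3 e1]
  have hTc : (T.card : ℝ) = ∑ D ∈ Finset.Icc 1 K, ∑ q ∈ rfS K m (Nat.lcm L D) c, ((U D q).card : ℝ) := by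
    simp only [T, Finset.card_sigma]; push_cast; rfl
  calc ((rfS K (m + 1) L c).card : ℝ) ≤ T.card := by exact_mod_cast hcard
    _ = _ := hTc
    _ ≤ ∑ D ∈ Finset.Icc 1 K, ∑ q ∈ rfS K m (Nat.lcm L D) c, 4 * K * (((Nat.gcd D L : ℕ) : ℝ) / D) := by
        apply Finset.sum_le_sum; intro D hD
        apply Finset.sum_le_sum; intro q _
        exact hU D hD q
    _ ≤ ∑ D ∈ Finset.Icc 1 K, R * (4 * K * (((Nat.gcd D L : ℕ) : ℝ) / D)) := by
        apply Finset.sum_le_sum; intro D hD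
        rw [Finset.sum_const, nsmul_eq_mul]
        gcongr
        exact hR D hD
    _ = 4 * K * (∑ D ∈ Finset.Icc 1 K, (((Nat.gcd D L : ℕ) : ℝ) / D)) * R := by
        rw [← Finset.mul_sum, ← Finset.mul_sum]; ring
    _ ≤ _ := by
        gcongr
        exact rf_gcd_sum K L hL

lemma rf_iter (K M : ℕ) (hK : 1 ≤ K) (T : ℝ) (hT0 : 0 ≤ T)
    (hT : ∀ L : ℕ, L ≠ 0 → L ≤ K ^ M → (L.divisors.card * (1 + Real.log K) : ℝ) ≤ T) (c : ℚ) :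
    ∀ m j L : ℕ, L ≠ 0 → L ≤ K ^ j → j + m ≤ M → ((rfS K m L c).card : ℝ) ≤ (4 * K * T) ^ m := by
  intro m
  induction m with
  | zero =>
    intro j L _ _ _
    simp only [pow_zero]
    have : (rfS K 0 L c).card ≤ 1 := Finset.card_le_one_of_subsingleton _
    exact_mod_cast this
  | succ m ih =>
    intro j L hL hLj hj
    have := rf_step K m L c hL ((4 * K * T) ^ m) (by
      intro D hD
      rw [Finset.mem_Icc] at hD
      apply ih (j + 1) _ (Nat.lcm_ne_zero hL (by omega)) _ (by omega)
      calc Nat.lcm L D ≤ L * D := Nat.le_of_dvd (Nat.mul_pos (Nat.pos_of_ne_zero hL) hD.1) (Nat.lcm_dvd_mul L D)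
        _ ≤ K ^ j * K := Nat.mul_le_mul hLj hD.2
        _ = _ := (pow_succ _ _).symm)
    refine this.trans ?_
    rw [pow_succ, mul_comm ((4 * K * T) ^ m)]
    gcongr
    exact hT L hL (hLj.trans (Nat.pow_le_pow_right hK (by omega)))

/-- The main counting lemma. -/
lemma rf_main (m : ℕ) (ε : ℝ) (hε : 0 < ε) : ∃ C : ℝ, 0 ≤ C ∧ ∀ K : ℕ, 1 ≤ K → ∀ c : ℚ,
    ((rfS K m 1 c).card : ℝ) ≤ C * (K : ℝ) ^ ((m : ℝ) + ε) := by
  set δ : ℝ := ε / ((m + 1) * (m + 1)) with hδ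
  have hδ0 : 0 < δ := by positivity
  obtain ⟨C, hC1, hC⟩ := rf_divisor_bound δ hδ0
  refine ⟨(4 * (C * (1 + 1 / δ))) ^ m, by positivity, ?_⟩
  intro K hK c
  have hK1 : (1 : ℝ) ≤ K := by exact_mod_cast hK
  have hlog : 1 + Real.log K ≤ (1 + 1 / δ) * (K : ℝ) ^ δ := by
    have h1 := Real.log_le_rpow_div (x := (K : ℝ)) (by positivity) hδ0
    have h2 : (1 : ℝ) ≤ (K : ℝ) ^ δ := Real.one_le_rpow hK1 hδ0.le
    calc _ ≤ (K : ℝ) ^ δ + (K : ℝ) ^ δ / δ := by linarith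
      _ = _ := by ring
  have := rf_iter K m hK (C * (1 + 1 / δ) * (K : ℝ) ^ (δ * (m + 1))) (by positivity) (by
    intro L hL hLK
    have h1 := hC L hL
    have h2 : (L : ℝ) ^ δ ≤ (K : ℝ) ^ (δ * m) := by
      calc (L : ℝ) ^ δ ≤ ((K : ℝ) ^ m) ^ δ := by
            gcongr; exact_mod_cast hLK
        _ = _ := by rw [← Real.rpow_natCast, ← Real.rpow_mul (by positivity), mul_comm]
    have hl0 : 0 ≤ 1 + Real.log K := by have := Real.log_nonneg hK1; linarith
    calc (L.divisors.card * (1 + Real.log K) : ℝ) ≤ (C * (K : ℝ) ^ (δ * m)) * ((1 + 1 / δ) * (K : ℝ) ^ δ) := by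
          gcongr
          exact h1.trans (by gcongr)
      _ = C * (1 + 1 / δ) * ((K : ℝ) ^ (δ * m) * (K : ℝ) ^ δ) := by ring
      _ = _ := by rw [← Real.rpow_add (by positivity)]; ring_nf) c m 0 1 one_ne_zero (by simp) (by omega)
  refine this.trans ?_
  have e : (4 * K * (C * (1 + 1 / δ) * (K : ℝ) ^ (δ * (m + 1)))) ^ m =
      (4 * (C * (1 + 1 / δ))) ^ m * ((K : ℝ) ^ m * ((K : ℝ) ^ (δ * (m + 1))) ^ m) := by
    rw [← mul_pow, ← mul_pow]; ring
  rw [e]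
  gcongr
  rw [← Real.rpow_natCast, ← Real.rpow_natCast, ← Real.rpow_mul (by positivity), ← Real.rpow_add (by positivity)]
  apply Real.rpow_le_rpow_of_exponent_le hK1
  have : δ * (m + 1) * m ≤ ε := by
    calc δ * (m + 1) * m ≤ δ * (m + 1) * (m + 1) := by gcongr; linarith
      _ = ε := by rw [hδ]; field_simp
  linarith

/-- rationals of height at most `N` -/
noncomputable def rfF (N : ℕ) : Finset ℚ :=
  ((Finset.Icc (-(N : ℤ)) N ×ˢ Finset.Icc 1 N).image (fun p : ℤ × ℕ => (p.1 : ℚ) / p.2)).filter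
    (fun x => (-(N : ℤ) ≤ x.num ∧ x.num ≤ N) ∧ x.den ≤ N)

lemma rf_memF (N : ℕ) (x : ℚ) : x ∈ rfF N ↔ (-(N : ℤ) ≤ x.num ∧ x.num ≤ N) ∧ x.den ≤ N := by
  rw [rfF, Finset.mem_filter, and_iff_right_iff_imp]
  intro h
  refine Finset.mem_image.2 ⟨(x.num, x.den), ?_, Rat.num_div_den x⟩
  rw [Finset.mem_product, Finset.mem_Icc, Finset.mem_Icc]
  exact ⟨h.1, x.pos, h.2⟩

/-- diagonal tuples -/
noncomputable def rfDiag (N m : ℕ) (c : ℚ) : Finset (Fin m → ℚ) :=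
  (Fintype.piFinset (fun _ : Fin m => rfF N)).filter (fun x => ∑ i, x i = c)

lemma rf_diag (m : ℕ) (ε : ℝ) (hε : 0 < ε) : ∃ C : ℝ, 0 ≤ C ∧ ∀ N : ℕ, 1 ≤ N → ∀ c : ℚ,
    ((rfDiag N m c).card : ℝ) ≤ C * (N : ℝ) ^ ((m : ℝ) + ε) := by
  obtain ⟨C, hC0, hC⟩ := rf_main m ε hε
  refine ⟨C, hC0, fun N hN c => le_trans ?_ (hC N hN c)⟩
  have : (rfDiag N m c).card ≤ (rfS N m 1 c).card := by
    apply Finset.card_le_card_of_injOn (fun x i => ((x i).num, (x i).den))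
    · intro x hx
      obtain ⟨h1, h2⟩ := Finset.mem_filter.1 hx
      rw [Fintype.mem_piFinset] at h1
      refine (rf_mem _ _ _ _ _).2 ⟨fun i => ?_, 0, ?_⟩
      · have := (rf_memF _ _).1 (h1 i)
        exact ⟨this.1, (x i).pos, this.2⟩
      · simp only [Rat.num_div_den, h2]; simp
    · intro x _ y _ hxy
      funext i
      have := congrFun hxy i
      simp only [Prod.mk.injEq] at this
      exact Rat.ext this.1 this.2
  exact_mod_cast this

/-- injective code for elements of `rfF N` -/
def rfCode (N : ℕ) (x : ℚ) : ℕ := (x.num + N).toNat * (N + 1) + x.den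

lemma rf_code_inj (N : ℕ) (x y : ℚ) (hx : x ∈ rfF N) (hy : y ∈ rfF N) (h : rfCode N x = rfCode N y) :
    x = y := by
  rw [rf_memF] at hx hy
  unfold rfCode at h
  have h1 : (x.num + N).toNat = (y.num + N).toNat := by
    have := congrArg (· / (N + 1)) h
    rw [mul_comm (x.num + N).toNat, mul_comm (y.num + N).toNat, Nat.mul_add_div (by omega), Nat.div_eq_of_lt (by omega : x.den < N + 1),
      Nat.mul_add_div (by omega), Nat.div_eq_of_lt (by omega : y.den < N + 1)] at this
    simpa using this
  have h2 : x.den = y.den := by rw [h1] at h; omega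
  exact Rat.ext (by omega) h2

/-- encoding of a product of two rationals as a fraction -/
def rfPhi (N : ℕ) (v : ℚ × ℚ) : ℤ × ℕ :=
  if v.1 = 0 then (0, rfCode N v.2) else if v.2 = 0 then (0, rfCode N v.1) else
    (v.1.num * v.2.num, v.1.den * v.2.den)

lemma rf_code_bd (N : ℕ) (hN : 1 ≤ N) (x : ℚ) (hx : x ∈ rfF N) :
    1 ≤ rfCode N x ∧ rfCode N x ≤ 5 * N ^ 2 := by
  rw [rf_memF] at hx
  have := x.pos
  unfold rfCode
  have h1 : (x.num + N).toNat ≤ 2 * N := by omega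
  refine ⟨by omega, ?_⟩
  calc (x.num + N).toNat * (N + 1) + x.den ≤ 2 * N * (N + 1) + N := by gcongr; exact hx.2
    _ ≤ _ := by nlinarith

lemma rf_phi_bd (N : ℕ) (hN : 1 ≤ N) (v : ℚ × ℚ) (h1 : v.1 ∈ rfF N) (h2 : v.2 ∈ rfF N) :
    (-((5 * N ^ 2 : ℕ) : ℤ) ≤ (rfPhi N v).1 ∧ (rfPhi N v).1 ≤ (5 * N ^ 2 : ℕ)) ∧
      (1 ≤ (rfPhi N v).2 ∧ (rfPhi N v).2 ≤ 5 * N ^ 2) := by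
  unfold rfPhi
  split_ifs
  · exact ⟨⟨by simp, by positivity⟩, rf_code_bd N hN _ h2⟩
  · exact ⟨⟨by simp, by positivity⟩, rf_code_bd N hN _ h1⟩
  · rw [rf_memF] at h1 h2
    have hp1 := v.1.pos
    have hp2 := v.2.pos
    have h3 : |v.1.num * v.2.num| ≤ (N : ℤ) * N := by
      rw [abs_mul]
      exact mul_le_mul (abs_le.2 h1.1) (abs_le.2 h2.1) (abs_nonneg _) (by positivity)
    have h4 := abs_le.1 h3
    refine ⟨⟨?_, ?_⟩, Nat.mul_pos hp1 hp2, ?_⟩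
    · push_cast; nlinarith
    · push_cast; nlinarith
    · calc v.1.den * v.2.den ≤ N * N := Nat.mul_le_mul h1.2 h2.2
        _ ≤ _ := by nlinarith

lemma rf_phi_val (N : ℕ) (v : ℚ × ℚ) : ((rfPhi N v).1 : ℚ) / (rfPhi N v).2 = v.1 * v.2 := by
  unfold rfPhi
  split_ifs with h1 h2
  · simp [h1]
  · simp [h2]
  · conv_rhs => rw [← Rat.num_div_den v.1, ← Rat.num_div_den v.2]
    push_cast
    rw [div_mul_div_comm]

lemma rf_fiber (N : ℕ) (A : ℤ) (D : ℕ) (hD : D ≠ 0) :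
    (((rfF N ×ˢ rfF N).filter (fun v => rfPhi N v = (A, D))).card) ≤
      2 * (if A = 0 then 1 else A.natAbs.divisors.card) * D.divisors.card := by
  by_cases hA : A = 0
  · subst hA
    have h1 : (((rfF N ×ˢ rfF N).filter (fun v => rfPhi N v = (0, D))).card) ≤ (Finset.univ : Finset Bool).card := by
      apply Finset.card_le_card_of_injOn (fun v => decide (v.1 = 0)) (by intro v _; exact Finset.mem_coe.2 (Finset.mem_univ _))
      have key : ∀ v ∈ (rfF N ×ˢ rfF N).filter (fun v => rfPhi N v = (0, D)),
          v.1 ∈ rfF N ∧ v.2 ∈ rfF N ∧ ((v.1 = 0 ∧ rfCode N v.2 = D) ∨ (v.1 ≠ 0 ∧ v.2 = 0 ∧ rfCode N v.1 = D)) := by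
        intro v hv
        obtain ⟨ha, hb⟩ := Finset.mem_filter.1 hv
        obtain ⟨ha1, ha2⟩ := Finset.mem_product.1 ha
        refine ⟨ha1, ha2, ?_⟩
        unfold rfPhi at hb
        split_ifs at hb with h1 h2
        · left; exact ⟨h1, (Prod.mk.inj hb).2⟩
        · right; exact ⟨h1, h2, (Prod.mk.inj hb).2⟩
        · exfalso
          have := (Prod.mk.inj hb).1
          simp [h1, h2] at this
      intro v hv w hw hvw
      obtain ⟨v1, v2, hv'⟩ := key v hv
      obtain ⟨w1, w2, hw'⟩ := key w hw
      have hvw' : v.1 = 0 ↔ w.1 = 0 := by simpa using hvw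
      rcases hv' with ⟨a, b⟩ | ⟨a, b, c⟩ <;> rcases hw' with ⟨a', b'⟩ | ⟨a', b', c'⟩
      · exact Prod.ext (by rw [a, a']) (rf_code_inj N _ _ v2 w2 (by rw [b, b']))
      · exact absurd (hvw'.1 a) a'
      · exact absurd (hvw'.2 a') a
      · exact Prod.ext (rf_code_inj N _ _ v1 w1 (by rw [c, c'])) (by rw [b, b'])
    have h2 : 1 ≤ D.divisors.card := Finset.card_pos.2 ⟨1, by simp [hD]⟩
    simp at h1 ⊢
    omega
  · rw [if_neg hA]
    have h1 : (((rfF N ×ˢ rfF N).filter (fun v => rfPhi N v = (A, D))).card) ≤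
        ((Finset.univ : Finset Bool) ×ˢ A.natAbs.divisors ×ˢ D.divisors).card := by
      have key : ∀ v ∈ (rfF N ×ˢ rfF N).filter (fun v => rfPhi N v = (A, D)),
          v.1.num * v.2.num = A ∧ v.1.den * v.2.den = D := by
        intro v hv
        obtain ⟨ha, hb⟩ := Finset.mem_filter.1 hv
        unfold rfPhi at hb
        split_ifs at hb with h1 h2
        · exact absurd (Prod.mk.inj hb).1.symm hA
        · exact absurd (Prod.mk.inj hb).1.symm hA
        · exact Prod.mk.inj hb
      apply Finset.card_le_card_of_injOn (fun v => (decide (0 ≤ v.1.num), v.1.num.natAbs, v.1.den))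
      · intro v hv
        obtain ⟨ha, hb⟩ := key v hv
        simp only [Finset.coe_product, Set.mem_prod, Finset.mem_coe, Nat.mem_divisors]
        refine ⟨Finset.mem_univ _, ⟨?_, by simpa using hA⟩, ⟨⟨_, hb.symm⟩, hD⟩⟩
        exact Int.natAbs_dvd_natAbs.2 ⟨_, ha.symm⟩
      · intro v hv w hw hvw
        obtain ⟨ha, hb⟩ := key v hv
        obtain ⟨ha', hb'⟩ := key w hw
        simp only [Prod.mk.injEq, decide_eq_decide] at hvw
        obtain ⟨e1, e2, e3⟩ := hvw
        have e4 : v.1.num = w.1.num := by omega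
        have hne : v.1.num ≠ 0 := by intro h; rw [h] at ha; simp at ha; exact hA ha.symm
        have e5 : v.2.num = w.2.num := by
          apply mul_left_cancel₀ hne
          rw [ha, e4, ha']
        have e6 : v.2.den = w.2.den := by
          apply Nat.eq_of_mul_eq_mul_left v.1.pos
          rw [hb, e3, hb']
        exact Prod.ext (Rat.ext e4 e3) (Rat.ext e5 e6)
    refine h1.trans (le_of_eq ?_)
    simp [Finset.card_product, mul_assoc]

/-- off-diagonal tuples -/
noncomputable def rfOff (N m : ℕ) (c : ℚ) : Finset (Fin m → ℚ × ℚ) :=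
  (Fintype.piFinset (fun _ : Fin m => rfF N ×ˢ rfF N)).filter (fun x => ∑ i, (x i).1 * (x i).2 = c)

lemma rf_off_card (N m : ℕ) (hN : 1 ≤ N) (c : ℚ) (B : ℝ) (hB : ∀ A : ℤ, ∀ D : ℕ,
    A.natAbs ≤ 5 * N ^ 2 → 1 ≤ D → D ≤ 5 * N ^ 2 →
    (((rfF N ×ˢ rfF N).filter (fun v => rfPhi N v = (A, D))).card : ℝ) ≤ B) :
    ((rfOff N m c).card : ℝ) ≤ B ^ m * (rfS (5 * N ^ 2) m 1 c).card := by
  classical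
  rw [Finset.card_eq_sum_card_fiberwise (f := fun p i => rfPhi N (p i)) (t := rfS (5 * N ^ 2) m 1 c)]
  · push_cast
    rw [mul_comm (B ^ m), ← nsmul_eq_mul]
    apply Finset.sum_le_card_nsmul
    intro w hw
    have hw1 := ((rf_mem _ _ _ _ _).1 hw).1
    calc (((rfOff N m c).filter (fun p => (fun i => rfPhi N (p i)) = w)).card : ℝ)
        ≤ ((Fintype.piFinset (fun i : Fin m => (rfF N ×ˢ rfF N).filter (fun v => rfPhi N v = w i))).card : ℝ) := by
          norm_cast
          apply Finset.card_le_card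
          intro p hp
          obtain ⟨h1, h2⟩ := Finset.mem_filter.1 hp
          have h3 := Fintype.mem_piFinset.1 (Finset.mem_filter.1 h1).1
          rw [Fintype.mem_piFinset]
          intro i
          exact Finset.mem_filter.2 ⟨h3 i, congrFun h2 i⟩
      _ = ∏ i : Fin m, (((rfF N ×ˢ rfF N).filter (fun v => rfPhi N v = w i)).card : ℝ) := by
          rw [Fintype.card_piFinset]; push_cast; rfl
      _ ≤ ∏ i : Fin m, B := by
          apply Finset.prod_le_prod
          · intros; positivity
          · intro i _
            have := hw1 i
            exact hB (w i).1 (w i).2 (by omega) this.2.1 this.2.2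
      _ = B ^ m := by simp
  · intro p hp
    obtain ⟨h1, h2⟩ := Finset.mem_filter.1 hp
    have h3 := Fintype.mem_piFinset.1 h1
    refine (rf_mem _ _ _ _ _).2 ⟨fun i => ?_, 0, ?_⟩
    · have := Finset.mem_product.1 (h3 i)
      exact rf_phi_bd N hN (p i) this.1 this.2
    · simp only [rf_phi_val, h2]; simp

lemma rf_off (m : ℕ) (ε : ℝ) (hε : 0 < ε) : ∃ C : ℝ, 0 ≤ C ∧ ∀ N : ℕ, 1 ≤ N → ∀ c : ℚ,
    ((rfOff N m c).card : ℝ) ≤ C * (N : ℝ) ^ ((2 * m : ℝ) + ε) := by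
  set δ : ℝ := ε / (4 * (m + 1)) with hδ
  have hδ0 : 0 < δ := by positivity
  obtain ⟨C, hC0, hC⟩ := rf_main m δ hδ0
  obtain ⟨E, hE1, hE⟩ := rf_divisor_bound (δ / 2) (by positivity)
  have hE0 : 0 ≤ E := by linarith
  refine ⟨(2 * E ^ 2) ^ m * C * (5 : ℝ) ^ (δ * m + (m + δ)), by positivity, ?_⟩
  intro N hN c
  have hN1 : (1 : ℝ) ≤ N := by exact_mod_cast hN
  set K : ℕ := 5 * N ^ 2 with hK
  have hK1 : 1 ≤ K := by rw [hK]; nlinarith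
  have hK1' : (1 : ℝ) ≤ K := by exact_mod_cast hK1
  have hdiv : ∀ a : ℕ, a ≠ 0 → a ≤ K → (a.divisors.card : ℝ) ≤ E * (K : ℝ) ^ (δ / 2) := by
    intro a ha haK
    refine (hE a ha).trans ?_
    gcongr
  have h1E : 1 ≤ E * (K : ℝ) ^ (δ / 2) := by
    have := Real.one_le_rpow hK1' (by positivity : 0 ≤ δ / 2)
    nlinarith
  have h1 := rf_off_card N m hN c (2 * E ^ 2 * (K : ℝ) ^ δ) (by
    intro A D hA hD1 hD2
    have h2 := rf_fiber N A D (by omega)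
    have h3 : (((rfF N ×ˢ rfF N).filter (fun v => rfPhi N v = (A, D))).card : ℝ) ≤
      2 * ((if A = 0 then 1 else A.natAbs.divisors.card : ℕ) : ℝ) * D.divisors.card := by exact_mod_cast h2
    have h4 : ((if A = 0 then 1 else A.natAbs.divisors.card : ℕ) : ℝ) ≤ E * (K : ℝ) ^ (δ / 2) := by
      split_ifs with h
      · simpa using h1E
      · exact hdiv _ (by simpa using h) hA
    calc _ ≤ _ := h3
      _ ≤ 2 * (E * (K : ℝ) ^ (δ / 2)) * (E * (K : ℝ) ^ (δ / 2)) := by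
        gcongr
        exact hdiv D (by omega) hD2
      _ = 2 * E ^ 2 * ((K : ℝ) ^ (δ / 2) * (K : ℝ) ^ (δ / 2)) := by ring
      _ = _ := by rw [← Real.rpow_add (by positivity)]; ring_nf)
  refine h1.trans ?_
  calc (2 * E ^ 2 * (K : ℝ) ^ δ) ^ m * ((rfS K m 1 c).card : ℝ)
      ≤ (2 * E ^ 2 * (K : ℝ) ^ δ) ^ m * (C * (K : ℝ) ^ ((m : ℝ) + δ)) := by
        gcongr; exact hC K hK1 c
    _ = (2 * E ^ 2) ^ m * C * (((K : ℝ) ^ δ) ^ m * (K : ℝ) ^ ((m : ℝ) + δ)) := by rw [mul_pow]; ring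
    _ = (2 * E ^ 2) ^ m * C * (K : ℝ) ^ (δ * m + (m + δ)) := by
        rw [← Real.rpow_natCast ((K : ℝ) ^ δ), ← Real.rpow_mul (by positivity), ← Real.rpow_add (by positivity)]
    _ = (2 * E ^ 2) ^ m * C * (5 : ℝ) ^ (δ * m + (m + δ)) * (N : ℝ) ^ (2 * (δ * m + (m + δ))) := by
        have : (K : ℝ) = 5 * (N : ℝ) ^ (2 : ℝ) := by rw [hK]; push_cast; norm_cast
        rw [this, Real.mul_rpow (by norm_num) (by positivity), ← Real.rpow_mul (by positivity)]; ring
    _ ≤ _ := by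
        gcongr
        have : δ * (4 * (m + 1)) = ε := by rw [hδ]; field_simp
        nlinarith

lemma rf_trace_sq {n : ℕ} (A B : Matrix (Fin n) (Fin n) ℚ) (h : A.charpoly = B.charpoly) :
    (A * A).trace = (B * B).trace := by
  have key : ∀ M : Matrix (Fin n) (Fin n) ℚ, ∀ t : ℚ, (M * M).charpoly.eval (t ^ 2) =
      M.charpoly.eval t * ((-1) ^ n * M.charpoly.eval (-t)) := by
    intro M t
    rw [Matrix.eval_charpoly, Matrix.eval_charpoly, Matrix.eval_charpoly]
    have e : (-1 : ℚ) ^ n * (Matrix.scalar (Fin n) (-t) - M).det = (Matrix.scalar (Fin n) t + M).det := by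
      have := Matrix.det_neg (Matrix.scalar (Fin n) (-t) - M)
      rw [Fintype.card_fin] at this
      rw [← this]
      congr 1
      rw [map_neg]; abel
    rw [e, ← Matrix.det_mul]
    congr 1
    have hc : M * Matrix.scalar (Fin n) t = Matrix.scalar (Fin n) t * M :=
      ((Matrix.scalar_commute t (fun r => mul_comm _ _) M).eq).symm
    rw [pow_two, map_mul, sub_mul, mul_add, mul_add, hc]
    abel
  have : (A * A).charpoly = (B * B).charpoly := by
    apply Polynomial.eq_of_infinite_eval_eq
    apply Set.Infinite.mono (s := Set.range (fun k : ℕ => ((k : ℚ)) ^ 2))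
    · rintro _ ⟨k, rfl⟩
      simp only [Set.mem_ofPred_eq]
      rw [key, key, h]
    · apply Set.infinite_range_of_injective
      intro a b hab
      have : (a : ℚ) = b := by
        exact (pow_left_inj₀ (by positivity) (by positivity) two_ne_zero).1 hab
      exact_mod_cast this
  rw [Matrix.trace_eq_neg_charpoly_nextCoeff, Matrix.trace_eq_neg_charpoly_nextCoeff, this]

lemma rf_sum_split {n : ℕ} (f : Fin n → Fin n → ℚ) (hf : ∀ i j, f i j = f j i) :
    ∑ i, ∑ j, f i j = ∑ i, f i i + 2 * ∑ p : {p : Fin n × Fin n // p.1 < p.2}, f p.1.1 p.1.2 := by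
  have h0 : ∑ p : {p : Fin n × Fin n // p.1 < p.2}, f p.1.1 p.1.2
      = ∑ i, ∑ j, if i < j then f i j else 0 := by
    rw [← Fintype.sum_prod_type' (f := fun i j => if i < j then f i j else 0), ← Finset.sum_filter]
    symm
    exact Finset.sum_subtype _ (by simp) (fun p : Fin n × Fin n => f p.1 p.2)
  have h1 : ∑ i : Fin n, ∑ j : Fin n, (if i < j then f i j else 0) = ∑ i : Fin n, ∑ j : Fin n, if j < i then f i j else 0 := by
    rw [Finset.sum_comm]
    refine Finset.sum_congr rfl fun i _ => Finset.sum_congr rfl fun j _ => ?_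
    rw [hf]
  have h2 : ∑ i, f i i = ∑ i : Fin n, ∑ j : Fin n, if i = j then f i j else 0 := by simp
  rw [h0, two_mul]
  nth_rewrite 2 [h1]
  rw [h2, ← Finset.sum_add_distrib, ← Finset.sum_add_distrib]
  refine Finset.sum_congr rfl fun i _ => ?_
  rw [← Finset.sum_add_distrib, ← Finset.sum_add_distrib]
  refine Finset.sum_congr rfl fun j _ => ?_
  rcases lt_trichotomy i j with h | h | h
  · simp [h, h.ne, not_lt.2 h.le]
  · simp [h]
  · simp [h, h.ne', not_lt.2 h.le]

lemma rf_farey (H : ℝ) (hH : 2 ≤ H) (x : ℚ) (hx : x ∈ Farey H) : x ∈ rfF ⌊H⌋₊ := by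
  obtain ⟨h1, h2⟩ := hx
  have h3 : x.den ≤ ⌊H⌋₊ := Nat.le_floor h2
  have h4 : x.num.natAbs ≤ ⌊H⌋₊ := Nat.le_floor (by rw [Nat.cast_natAbs]; push_cast; exact h1)
  rw [rf_memF]
  exact ⟨by omega, h3⟩

theorem stmt7 (n : ℕ) (hn : n ≥ 3) :
    ∀ ε > (0 : ℝ), ∃ C : ℝ, ∀ H : ℝ, H ≥ 2 →
      ∀ f : Polynomial ℚ, f.Monic → f.natDegree = n →
      (Set.ncard {A : Matrix (Fin n) (Fin n) ℚ |
          (∀ i j, A i j ∈ Farey H) ∧ A.charpoly = f} : ℝ) ≤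
        C * H ^ ((n ^ 2 : ℝ) + ε) := by
  intro ε hε
  set m : ℕ := Fintype.card {p : Fin n × Fin n // p.1 < p.2} with hm
  have hmn : (n : ℝ) + 2 * m = (n : ℝ) ^ 2 := by
    have := rf_sum_split (n := n) (fun _ _ => 1) (fun _ _ => rfl)
    simp only [Finset.sum_const, Finset.card_univ, Fintype.card_fin, nsmul_eq_mul, mul_one, ← hm] at this
    have h2 : n * n = n + 2 * m := by exact_mod_cast this
    have h3 : (n : ℝ) * n = n + 2 * m := by exact_mod_cast h2
    rw [← h3]; ring
  let e : Fin m ≃ {p : Fin n × Fin n // p.1 < p.2} := (Fintype.equivFin _).symm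
  obtain ⟨C1, hC10, hC1⟩ := rf_diag n (ε / 2) (by positivity)
  obtain ⟨C2, hC20, hC2⟩ := rf_off m (ε / 2) (by positivity)
  refine ⟨C1 * C2, ?_⟩
  intro H hH f _ _
  rcases Set.eq_empty_or_nonempty {A : Matrix (Fin n) (Fin n) ℚ |
          (∀ i j, A i j ∈ Farey H) ∧ A.charpoly = f} with h0 | ⟨A0, hA0⟩
  · rw [h0]
    simp only [Set.ncard_empty, Nat.cast_zero]
    positivity
  set N := ⌊H⌋₊ with hN
  have hN1 : 1 ≤ N := Nat.le_floor (by norm_num; linarith)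
  have hNH : (N : ℝ) ≤ H := Nat.floor_le (by linarith)
  let T : Finset (Σ _ : (Fin n → ℚ), (Fin m → ℚ × ℚ)) :=
    (rfDiag N n A0.trace).sigma (fun d => rfOff N m (((A0 * A0).trace - ∑ i, d i * d i) / 2))
  have hcard : Set.ncard {A : Matrix (Fin n) (Fin n) ℚ |
          (∀ i j, A i j ∈ Farey H) ∧ A.charpoly = f} ≤ T.card := by
    rw [← Set.ncard_coe_finset T]
    apply Set.ncard_le_ncard_of_injOn
      (fun A => ⟨fun i => A i i, fun k => (A (e k).1.1 (e k).1.2, A (e k).1.2 (e k).1.1)⟩) _ _ T.finite_toSet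
    · rintro A ⟨hA1, hA2⟩
      have hF : ∀ i j, A i j ∈ rfF N := fun i j => rf_farey H hH _ (hA1 i j)
      have hch : A.charpoly = A0.charpoly := by rw [hA2, hA0.2]
      have ht : A.trace = A0.trace := by
        rw [Matrix.trace_eq_neg_charpoly_nextCoeff, Matrix.trace_eq_neg_charpoly_nextCoeff, hch]
      have ht2 := rf_trace_sq A A0 hch
      simp only [T, Finset.coe_sigma, Set.mem_sigma_iff, Finset.mem_coe]
      refine ⟨Finset.mem_filter.2 ⟨Fintype.mem_piFinset.2 fun i => hF i i, ht⟩,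
        Finset.mem_filter.2 ⟨Fintype.mem_piFinset.2 fun k => Finset.mem_product.2 ⟨hF _ _, hF _ _⟩, ?_⟩⟩
      have hs := rf_sum_split (fun i j => A i j * A j i) (fun i j => mul_comm _ _)
      have htr : (A * A).trace = ∑ i, ∑ j, A i j * A j i := by
        simp [Matrix.trace, Matrix.mul_apply]
      rw [← ht2, htr, hs]
      rw [← Equiv.sum_comp e (fun p => A p.1.1 p.1.2 * A p.1.2 p.1.1)]
      simp only
      ring
    · intro A _ B _ hAB
      simp only [Sigma.mk.injEq, heq_eq_eq] at hAB
      obtain ⟨h1, h2⟩ := hAB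
      ext i j
      rcases lt_trichotomy i j with h | h | h
      · have := congrFun h2 (e.symm ⟨(i, j), h⟩)
        simp only [Equiv.apply_symm_apply, Prod.mk.injEq] at this
        exact this.1
      · subst h; exact congrFun h1 i
      · have := congrFun h2 (e.symm ⟨(j, i), h⟩)
        simp only [Equiv.apply_symm_apply, Prod.mk.injEq] at this
        exact this.2
  have hNp : (0 : ℝ) < N := by exact_mod_cast hN1
  calc _ ≤ (T.card : ℝ) := by exact_mod_cast hcard
    _ = ∑ d ∈ rfDiag N n A0.trace, ((rfOff N m (((A0 * A0).trace - ∑ i, d i * d i) / 2)).card : ℝ) := by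
      simp only [T, Finset.card_sigma]; push_cast; rfl
    _ ≤ ∑ d ∈ rfDiag N n A0.trace, C2 * (N : ℝ) ^ ((2 * m : ℝ) + ε / 2) :=
      Finset.sum_le_sum fun d _ => hC2 N hN1 _
    _ = (rfDiag N n A0.trace).card * (C2 * (N : ℝ) ^ ((2 * m : ℝ) + ε / 2)) := by
      rw [Finset.sum_const, nsmul_eq_mul]
    _ ≤ (C1 * (N : ℝ) ^ ((n : ℝ) + ε / 2)) * (C2 * (N : ℝ) ^ ((2 * m : ℝ) + ε / 2)) := by
      gcongr; exact hC1 N hN1 _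
    _ = C1 * C2 * ((N : ℝ) ^ ((n : ℝ) + ε / 2) * (N : ℝ) ^ ((2 * m : ℝ) + ε / 2)) := by ring
    _ = C1 * C2 * (N : ℝ) ^ ((n ^ 2 : ℝ) + ε) := by
      rw [← Real.rpow_add hNp, ← hmn]; ring_nf
    _ ≤ _ := by gcongr
end

section
/- Let n ≥ m > 2 be integers. For every ε > 0 there exists a constant C = C(m, n, ε) such that for all real H ≥ 2 the number of m×n matrices with all entries in E(H) and of rank exactly 2 is at most C·H^{7+ε} if (m,n) = (3,3), and at most C·H^{2n+m−3+ε} if (m,n) ≠ (3,3). -/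
/-- The set of Egyptian (unit) fractions `1/a` with `a` a nonzero integer, `|a| ≤ H`. -/
def Egyptian (H : ℝ) : Set ℚ := {x : ℚ | ∃ a : ℤ, a ≠ 0 ∧ (|a| : ℝ) ≤ H ∧ x = 1 / (a : ℚ)}

theorem divisor_bound (δ : ℝ) (hδ : 0 < δ) : ∃ C : ℝ, 1 ≤ C ∧ ∀ k : ℕ, k ≠ 0 →
    (k.divisors.card : ℝ) ≤ C * (k : ℝ) ^ δ := by
  have hl : 0 < Real.log 2 := Real.log_pos (by norm_num)
  set M : ℝ := 1 + 1 / (δ * Real.log 2) with hM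
  have hM1 : 1 ≤ M := by
    have : 0 < 1 / (δ * Real.log 2) := by positivity
    linarith
  set P : ℕ := ⌈(2 : ℝ) ^ (1 / δ)⌉₊ with hP
  refine ⟨M ^ P, one_le_pow₀ hM1, fun k hk => ?_⟩
  have key : ∀ p : ℕ, p.Prime → ∀ e : ℕ,
      ((e : ℝ) + 1) ≤ (if p < P then M else 1) * ((p : ℝ) ^ e) ^ δ := by
    intro p hp e
    have hp2 : (2 : ℝ) ≤ p := by exact_mod_cast hp.two_le
    have hcomm : ((p : ℝ) ^ e) ^ δ = ((p : ℝ) ^ δ) ^ e := by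
      rw [← Real.rpow_natCast, ← Real.rpow_mul (by positivity), mul_comm, Real.rpow_mul (by positivity),
        Real.rpow_natCast]
    rw [hcomm]
    split_ifs with h
    · have h1 : (2 : ℝ) ^ δ ≤ (p : ℝ) ^ δ := Real.rpow_le_rpow (by norm_num) hp2 hδ.le
      have h2 : 1 + δ * Real.log 2 ≤ (2 : ℝ) ^ δ := by
        rw [Real.rpow_def_of_pos (by norm_num)]
        have := Real.add_one_le_exp (Real.log 2 * δ)
        linarith
      have h3 : 1 + (e : ℝ) * (δ * Real.log 2) ≤ (1 + δ * Real.log 2) ^ e :=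
        one_add_mul_le_pow (by nlinarith [mul_pos hδ hl]) e
      have h4 : (1 + δ * Real.log 2) ^ e ≤ ((p : ℝ) ^ δ) ^ e :=
        pow_le_pow_left₀ (by positivity) (h2.trans h1) e
      have h5 : (e : ℝ) + 1 ≤ M * (1 + (e : ℝ) * (δ * Real.log 2)) := by
        have : M * (1 + (e : ℝ) * (δ * Real.log 2)) =
          1 + e * (δ * Real.log 2) + 1 / (δ * Real.log 2) + e := by
          rw [hM]; field_simp; ring
        rw [this]
        have : 0 < 1 / (δ * Real.log 2) := by positivity
        have : 0 ≤ e * (δ * Real.log 2) := by positivity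
        linarith
      exact h5.trans (mul_le_mul_of_nonneg_left (h3.trans h4) (by linarith))
    · rw [one_mul]
      have h1 : (2 : ℝ) ^ (1 / δ) ≤ p := (Nat.le_ceil _).trans (by exact_mod_cast (not_lt.mp h))
      have h2 : (2 : ℝ) ≤ (p : ℝ) ^ δ := by
        have := Real.rpow_le_rpow (by positivity) h1 hδ.le
        rwa [← Real.rpow_mul (by norm_num), one_div_mul_cancel hδ.ne', Real.rpow_one] at this
      have h3 : (e : ℝ) + 1 ≤ 2 ^ e := by exact_mod_cast Nat.lt_two_pow_self (n := e)
      exact h3.trans (pow_le_pow_left₀ (by norm_num) h2 e)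
  rw [Nat.card_divisors hk]
  push_cast
  have hprod : (k : ℝ) ^ δ = ∏ p ∈ k.primeFactors, ((p : ℝ) ^ (k.factorization p)) ^ δ := by
    rw [Real.finsetProd_rpow _ _ (fun i _ => by positivity)]
    congr 1
    conv_lhs => rw [← Nat.prod_factorization_pow_eq_self hk]
    rw [Finsupp.prod]
    push_cast
    rfl
  calc ∏ p ∈ k.primeFactors, ((k.factorization p : ℝ) + 1)
      ≤ ∏ p ∈ k.primeFactors, ((if p < P then M else 1) * ((p : ℝ) ^ (k.factorization p)) ^ δ) :=
        Finset.prod_le_prod (fun i _ => by positivity)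
          (fun p hp => key p (Nat.prime_of_mem_primeFactors hp) _)
    _ = (∏ p ∈ k.primeFactors, (if p < P then M else 1)) * (k : ℝ) ^ δ := by
        rw [Finset.prod_mul_distrib, hprod]
    _ ≤ M ^ P * (k : ℝ) ^ δ := by
        refine mul_le_mul_of_nonneg_right ?_ (by positivity)
        rw [← Finset.prod_filter, Finset.prod_const]
        refine pow_le_pow_right₀ hM1 ?_
        calc _ ≤ (Finset.range P).card := Finset.card_le_card (fun x hx => by
              simp at hx ⊢; exact hx.2)
          _ = P := by simp

/-- Nine-entry form: product of all entries times the determinant of the matrix of reciprocals. -/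
def E9 (a b c d e f g h k : ℤ) : ℤ :=
  b*c*d*f*g*h - b*c*d*e*g*k - a*c*e*f*g*h + a*c*d*e*h*k + a*b*e*f*g*k - a*b*d*f*h*k

noncomputable def Bx (N : ℕ) : Finset ℤ := (Finset.Icc (-(N : ℤ)) N).erase 0

theorem mem_Bx {N : ℕ} {x : ℤ} : x ∈ Bx N ↔ x ≠ 0 ∧ |x| ≤ N := by
  simp [Bx, abs_le]

theorem card_Bx (N : ℕ) : (Bx N).card = 2 * N := by
  rw [Bx, Finset.card_erase_of_mem (by simp)]
  simp; omega

/-- all 3x3 minors of the reciprocal matrix vanish, all entries are in the box -/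
def Good {m n : ℕ} (N : ℕ) (B : Fin m → Fin n → ℤ) : Prop :=
  (∀ i j, B i j ∈ Bx N) ∧ ∀ i₁ i₂ i₃ j₁ j₂ j₃,
    E9 (B i₁ j₁) (B i₁ j₂) (B i₁ j₃) (B i₂ j₁) (B i₂ j₂) (B i₂ j₃) (B i₃ j₁) (B i₃ j₂) (B i₃ j₃) = 0

theorem good_of_rank {m n : ℕ} (N : ℕ) (B : Fin m → Fin n → ℤ) (hB : ∀ i j, B i j ∈ Bx N)
    (hr : (Matrix.of (fun i j => 1 / (B i j : ℚ))).rank = 2) :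
    Good N B ∧ ∃ i₁ i₂ j₁ j₂, B i₁ j₁ * B i₂ j₂ ≠ B i₁ j₂ * B i₂ j₁ := by
  have hne : ∀ i j, (B i j : ℚ) ≠ 0 := fun i j => by exact_mod_cast (mem_Bx.1 (hB i j)).1
  refine ⟨⟨hB, fun i₁ i₂ i₃ j₁ j₂ j₃ => ?_⟩, ?_⟩
  · set A := (Matrix.of (fun i j => 1 / (B i j : ℚ))) with hA
    have h1 := Matrix.rank_submatrix_le A ![i₁, i₂, i₃] ![j₁, j₂, j₃]
    have h2 : (A.submatrix ![i₁, i₂, i₃] ![j₁, j₂, j₃]).det = 0 := by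
      by_contra h
      have := Matrix.rank_of_isUnit _ ((Matrix.isUnit_iff_isUnit_det _).2 (isUnit_iff_ne_zero.2 h))
      rw [Fintype.card_fin] at this
      omega
    rw [Matrix.det_fin_three] at h2
    simp [hA] at h2
    have a1 := hne i₁ j₁
    have a2 := hne i₁ j₂
    have a3 := hne i₁ j₃
    have a4 := hne i₂ j₁
    have a5 := hne i₂ j₂
    have a6 := hne i₂ j₃
    have a7 := hne i₃ j₁
    have a8 := hne i₃ j₂
    have a9 := hne i₃ j₃
    have : ((E9 (B i₁ j₁) (B i₁ j₂) (B i₁ j₃) (B i₂ j₁) (B i₂ j₂) (B i₂ j₃) (B i₃ j₁) (B i₃ j₂) (B i₃ j₃) : ℤ) : ℚ) = 0 := by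
      rw [E9]
      push_cast
      generalize (B i₁ j₁ : ℚ) = a at *
      generalize (B i₁ j₂ : ℚ) = b at *
      generalize (B i₁ j₃ : ℚ) = c at *
      generalize (B i₂ j₁ : ℚ) = d at *
      generalize (B i₂ j₂ : ℚ) = e at *
      generalize (B i₂ j₃ : ℚ) = f at *
      generalize (B i₃ j₁ : ℚ) = g at *
      generalize (B i₃ j₂ : ℚ) = h at *
      generalize (B i₃ j₃ : ℚ) = k at *
      have := congrArg (fun x => x * (a*b*c*d*e*f*g*h*k)) h2
      simp only [zero_mul] at this
      rw [← this]
      field_simp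
    exact_mod_cast this
  · by_contra! hcon
    have hmpos : Nonempty (Fin m) := by
      by_contra h
      rw [not_nonempty_iff] at h
      have := Matrix.rank_le_card_height (Matrix.of (fun i j => 1 / (B i j : ℚ)))
      have h0 := Fintype.card_eq_zero_iff.2 h
      omega
    have hnpos : Nonempty (Fin n) := by
      by_contra h
      rw [not_nonempty_iff] at h
      have := Matrix.rank_le_card_width (Matrix.of (fun i j => 1 / (B i j : ℚ)))
      have h0 := Fintype.card_eq_zero_iff.2 h
      omega
    obtain ⟨i0⟩ := hmpos
    obtain ⟨j0⟩ := hnpos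
    have : Matrix.of (fun i j => 1 / (B i j : ℚ)) =
        Matrix.vecMulVec (fun i => (B i0 j0 : ℚ) / (B i j0 : ℚ)) (fun j => 1 / (B i0 j : ℚ)) := by
      ext i j
      simp only [Matrix.of_apply, Matrix.vecMulVec_apply]
      have h := hcon i0 i j0 j
      have h' : (B i0 j0 : ℚ) * B i j = B i0 j * B i j0 := by exact_mod_cast h
      have := hne i j
      have := hne i0 j
      have := hne i j0
      field_simp
      linarith
    rw [this] at hr
    have := Matrix.rank_vecMulVec_le (fun i => (B i0 j0 : ℚ) / (B i j0 : ℚ)) (fun j => 1 / (B i0 j : ℚ))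
    omega

theorem fiber_card {α β : Type*} [DecidableEq β] (S : Finset α) (f : α → β) (T : Finset β) (K : ℕ)
    (hf : ∀ a ∈ S, f a ∈ T) (h : ∀ b ∈ S, (S.filter (fun a => f a = f b)).card ≤ K) :
    S.card ≤ K * T.card := by
  refine Finset.card_le_mul_card_image_of_maps_to hf K fun t _ => ?_
  rcases (S.filter (fun a => f a = t)).eq_empty_or_nonempty with h0 | ⟨b, hb⟩
  · simp [h0]
  · rw [Finset.mem_filter] at hb
    rw [← hb.2]
    exact h b hb.1

theorem pi_bound {ι β : Type*} [Fintype ι] [DecidableEq ι] (T : ι → Finset β) (I : Finset ι)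
    (K : ℕ) (h1 : ∀ i ∈ I, (T i).card ≤ 1) (h2 : ∀ i, i ∉ I → (T i).card ≤ K) :
    (Fintype.piFinset T).card ≤ K ^ (Fintype.card ι - I.card) := by
  rw [Fintype.card_piFinset]
  calc ∏ i, (T i).card ≤ ∏ i, (if i ∈ I then 1 else K) :=
        Finset.prod_le_prod' fun i _ => by
          split_ifs with h
          · exact h1 i h
          · exact h2 i h
    _ = K ^ (Fintype.card ι - I.card) := by
        rw [Finset.prod_ite, Finset.prod_const_one, one_mul, Finset.prod_const]
        congr 1
        rw [← Finset.card_compl]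
        congr 1
        ext; simp

theorem div_count (F : Finset ℤ) (z : ℤ) (D : ℕ) (hz : z ≠ 0) (hD : z.natAbs.divisors.card ≤ D)
    (hF : ∀ d ∈ F, d ∣ z) : F.card ≤ 2 * D := by
  classical
  have : F ⊆ z.natAbs.divisors.image (fun d : ℕ => (d : ℤ)) ∪
      z.natAbs.divisors.image (fun d : ℕ => -(d : ℤ)) := by
    intro d hd
    have h := Int.natAbs_dvd_natAbs.2 (hF d hd)
    have h' : d.natAbs ∈ z.natAbs.divisors := Nat.mem_divisors.2 ⟨h, by simpa using hz⟩
    rw [Finset.mem_union, Finset.mem_image, Finset.mem_image]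
    rcases Int.natAbs_eq d with h0 | h0
    · left; exact ⟨_, h', h0.symm⟩
    · right; exact ⟨_, h', h0.symm⟩
  calc F.card ≤ _ := Finset.card_le_card this
    _ ≤ _ := Finset.card_union_le _ _
    _ ≤ D + D := add_le_add (Finset.card_image_le.trans hD) (Finset.card_image_le.trans hD)
    _ = 2 * D := by ring

def DB (N D : ℕ) : Prop := ∀ k : ℕ, k ≠ 0 → k ≤ 4 * N ^ 10 → k.divisors.card ≤ D

theorem eq_count (N D : ℕ) (hD : DB N D) (U V W : ℤ) (hU : U ≠ 0) (hV : V ≠ 0) (hW : W ≠ 0)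
    (hVb : |V| ≤ 2 * N ^ 4) (hWb : |W| ≤ 2 * N ^ 4) :
    (((Bx N) ×ˢ (Bx N) ×ˢ (Bx N)).filter (fun t : ℤ × ℤ × ℤ =>
      U * t.2.1 * t.2.2 + V * t.1 * t.2.2 + W * t.1 * t.2.1 = 0)).card ≤ (2 * D) * (2 * N) := by
  classical
  rw [← card_Bx N]
  refine fiber_card _ (fun t => t.1) _ _ (fun t ht => by simp at ht; exact ht.1.1) ?_
  rintro ⟨x, y0, z0⟩ h0
  simp only [Finset.mem_filter, Finset.mem_product] at h0
  have hx := mem_Bx.1 h0.1.1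
  have hne : x ^ 2 * V * W ≠ 0 := by
    have := hx.1
    positivity
  set G := (Finset.filter (fun a : ℤ × ℤ × ℤ => a.1 = (x, y0, z0).1) (((Bx N) ×ˢ (Bx N) ×ˢ (Bx N)).filter (fun t : ℤ × ℤ × ℤ =>
      U * t.2.1 * t.2.2 + V * t.1 * t.2.2 + W * t.1 * t.2.1 = 0))) with hG
  have hmem : ∀ t ∈ G, t.1 = x ∧ (U * t.2.1 + x * V) * (U * t.2.2 + x * W) = x ^ 2 * V * W := by
    intro t ht
    simp only [hG, Finset.mem_filter, Finset.mem_product] at ht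
    obtain ⟨⟨_, h1⟩, h2⟩ := ht
    rw [h2] at h1
    exact ⟨h2, by linear_combination U * h1⟩
  have hinj : Set.InjOn (fun t : ℤ × ℤ × ℤ => U * t.2.1 + x * V) (G : Set (ℤ × ℤ × ℤ)) := by
    rintro ⟨x1, y1, z1⟩ h1 ⟨x2, y2, z2⟩ h2 h
    have e1 := hmem _ h1
    have e2 := hmem _ h2
    simp only at h e1 e2
    have hy : y1 = y2 := by
      have : U * y1 = U * y2 := by linarith
      exact mul_left_cancel₀ hU this
    subst hy
    have hz : z1 = z2 := by
      have hn : U * y1 + x * V ≠ 0 := by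
        intro h; rw [h] at e1; rw [zero_mul] at e1; exact hne e1.2.symm
      have : U * z1 + x * W = U * z2 + x * W := mul_left_cancel₀ hn (e1.2.trans e2.2.symm)
      exact mul_left_cancel₀ hU (by linarith)
    rw [e1.1, e2.1, hz]
  rw [← Finset.card_image_of_injOn hinj]
  refine div_count _ (x ^ 2 * V * W) D hne (hD _ (by simpa using hne) ?_) ?_
  · have : ((x ^ 2 * V * W).natAbs : ℤ) ≤ 4 * N ^ 10 := by
      rw [Int.natCast_natAbs, abs_mul, abs_mul, abs_pow]
      calc |x| ^ 2 * |V| * |W| ≤ (N : ℤ) ^ 2 * (2 * N ^ 4) * (2 * N ^ 4) := by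
            gcongr; exact hx.2
        _ = 4 * (N : ℤ) ^ 10 := by ring
    exact_mod_cast this
  · intro d hd
    rw [Finset.mem_image] at hd
    obtain ⟨t, ht, rfl⟩ := hd
    exact Dvd.intro _ (hmem t ht).2

noncomputable def Rset (N : ℕ) (a b c d e f : ℤ) : Finset (ℤ × ℤ × ℤ) :=
  ((Bx N) ×ˢ (Bx N) ×ˢ (Bx N)).filter (fun t => E9 a b c d e f t.1 t.2.1 t.2.2 = 0)

theorem aux_bd (N : ℕ) (p q r s t u : ℤ) (h1 : p ∈ Bx N) (h2 : q ∈ Bx N) (h3 : r ∈ Bx N)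
    (h4 : s ∈ Bx N) (h5 : t ∈ Bx N) (h6 : u ∈ Bx N) : |p * q * (r * s - t * u)| ≤ 2 * N ^ 4 := by
  rw [abs_mul, abs_mul]
  have := mem_Bx.1 h1
  have := mem_Bx.1 h2
  have := mem_Bx.1 h3
  have := mem_Bx.1 h4
  have := mem_Bx.1 h5
  have := mem_Bx.1 h6
  have h : |r * s - t * u| ≤ |r| * |s| + |t| * |u| := by
    rw [← abs_mul, ← abs_mul]; exact abs_sub _ _
  calc |p| * |q| * |r * s - t * u| ≤ N * N * (N * N + N * N) := by
        gcongr
        · tauto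
        · tauto
        · refine h.trans ?_
          gcongr <;> tauto
    _ = 2 * N ^ 4 := by ring

theorem Rset_card (N D : ℕ) (hD : DB N D) (a b c d e f : ℤ) (ha : a ∈ Bx N) (hb : b ∈ Bx N)
    (hc : c ∈ Bx N) (hd : d ∈ Bx N) (he : e ∈ Bx N) (hf : f ∈ Bx N)
    (h1 : a * e ≠ b * d) (h2 : a * f ≠ c * d) (h3 : b * f ≠ c * e) :
    (Rset N a b c d e f).card ≤ (2 * D) * (2 * N) := by
  have a0 := (mem_Bx.1 ha).1
  have b0 := (mem_Bx.1 hb).1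
  have c0 := (mem_Bx.1 hc).1
  have d0 := (mem_Bx.1 hd).1
  have e0 := (mem_Bx.1 he).1
  have f0 := (mem_Bx.1 hf).1
  have := eq_count N D hD (a * d * (c * e - b * f)) (b * e * (a * f - c * d)) (c * f * (b * d - a * e))
    (mul_ne_zero (mul_ne_zero a0 d0) (sub_ne_zero.2 h3.symm))
    (mul_ne_zero (mul_ne_zero b0 e0) (sub_ne_zero.2 h2))
    (mul_ne_zero (mul_ne_zero c0 f0) (sub_ne_zero.2 h1.symm))
    (aux_bd N _ _ _ _ _ _ hb he ha hf hc hd) (aux_bd N _ _ _ _ _ _ hc hf hb hd ha he)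
  refine le_trans (Finset.card_le_card ?_) this
  intro t ht
  rw [Rset, Finset.mem_filter] at ht
  rw [Finset.mem_filter]
  refine ⟨ht.1, ?_⟩
  rw [← ht.2, E9]
  ring

noncomputable def Qset (N : ℕ) : Finset ((ℤ × ℤ) × (ℤ × ℤ)) :=
  (((Bx N) ×ˢ (Bx N)) ×ˢ ((Bx N) ×ˢ (Bx N))).filter (fun t => t.1.1 * t.1.2 = t.2.1 * t.2.2)

theorem Qset_card (N D : ℕ) (hD : DB N D) : (Qset N).card ≤ (2 * D) * (2 * N) ^ 2 := by
  classical
  have hc : ((Bx N) ×ˢ (Bx N)).card = (2 * N) ^ 2 := by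
    rw [Finset.card_product, card_Bx, sq]
  rw [← hc]
  refine fiber_card _ (fun t => t.1) _ _ (fun t ht => ?_) ?_
  · rw [Qset, Finset.mem_filter, Finset.mem_product] at ht; exact ht.1.1
  rintro ⟨⟨a, d⟩, y⟩ h0
  rw [Qset, Finset.mem_filter, Finset.mem_product, Finset.mem_product] at h0
  have ha := mem_Bx.1 h0.1.1.1
  have hd := mem_Bx.1 h0.1.1.2
  simp only at ha hd
  have hne : a * d ≠ 0 := mul_ne_zero ha.1 hd.1
  set G := Finset.filter (fun t => t.1 = ((a, d), y).1) (Qset N) with hG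
  have hmem : ∀ t ∈ G, t.1 = (a, d) ∧ t.2.1 * t.2.2 = a * d := by
    intro t ht
    rw [hG, Finset.mem_filter, Qset, Finset.mem_filter] at ht
    refine ⟨ht.2, ?_⟩
    rw [← ht.1.2, ht.2]
  have hinj : Set.InjOn (fun t : ((ℤ × ℤ) × (ℤ × ℤ)) => t.2.1) (G : Set _) := by
    rintro ⟨x1, y1, z1⟩ h1 ⟨x2, y2, z2⟩ h2 h
    have e1 := hmem _ h1
    have e2 := hmem _ h2
    simp only at h e1 e2
    subst h
    have hn : y1 ≠ 0 := by
      intro h; rw [h, zero_mul] at e1; exact hne e1.2.symm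
    rw [e1.1, e2.1, mul_left_cancel₀ hn (e1.2.trans e2.2.symm)]
  rw [← Finset.card_image_of_injOn hinj]
  refine div_count _ (a * d) D hne (hD _ (by simpa using hne) ?_) ?_
  · have hN : 1 ≤ N := by
      have := Int.one_le_abs ha.1
      have := ha.2
      omega
    have : ((a * d).natAbs : ℤ) ≤ N ^ 2 := by
      rw [Int.natCast_natAbs, abs_mul, sq]
      gcongr
      · exact ha.2
      · exact hd.2
    have h' : (a * d).natAbs ≤ N ^ 2 := by exact_mod_cast this
    calc _ ≤ N ^ 2 := h'
      _ ≤ N ^ 10 := Nat.pow_le_pow_right hN (by norm_num)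
      _ ≤ 4 * N ^ 10 := by omega
  · intro d hd
    rw [Finset.mem_image] at hd
    obtain ⟨t, ht, rfl⟩ := hd
    exact Dvd.intro _ (hmem t ht).2

theorem det_unique (a b c d e f g h k k' : ℤ) (c0 : c ≠ 0) (f0 : f ≠ 0) (g0 : g ≠ 0) (h0 : h ≠ 0)
    (hm : a * e ≠ b * d) (h1 : E9 a b c d e f g h k = 0) (h2 : E9 a b c d e f g h k' = 0) :
    k = k' := by
  have hY : g * h * (c * f) * (a * e - b * d) ≠ 0 :=
    mul_ne_zero (mul_ne_zero (mul_ne_zero g0 h0) (mul_ne_zero c0 f0)) (sub_ne_zero.2 hm)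
  rw [E9] at h1 h2
  set X := -b*c*d*e*g + a*c*d*e*h + a*b*e*f*g - a*b*d*f*h with hX
  have e1 : X * k = g * h * (c * f) * (a * e - b * d) := by rw [hX]; linear_combination h1
  have e2 : X * k' = g * h * (c * f) * (a * e - b * d) := by rw [hX]; linear_combination h2
  have hX0 : X ≠ 0 := by
    intro h; rw [h, zero_mul] at e1; exact hY e1.symm
  exact mul_left_cancel₀ hX0 (e1.trans e2.symm)

theorem E9_transpose (a b c d e f g h k : ℤ) : E9 a d g b e h c f k = E9 a b c d e f g h k := by
  rw [E9, E9]; ring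

theorem prop_of_minor (a b c d e f g h k : ℤ) (b0 : b ≠ 0) (f0 : f ≠ 0) (g0 : g ≠ 0)
    (hm : a * e ≠ b * d) (h0 : a * h = b * g) (h1 : E9 a b c d e f g h k = 0) :
    a * k = c * g := by
  have hne : g * b * f * (a * e - b * d) ≠ 0 :=
    mul_ne_zero (mul_ne_zero (mul_ne_zero g0 b0) f0) (sub_ne_zero.2 hm)
  have : g * b * f * (a * e - b * d) * (a * k - c * g) = 0 := by
    rw [E9] at h1
    linear_combination a * h1 - (b*c*d*f*g - a*c*e*f*g + a*c*d*e*k - a*b*d*f*k) * h0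
  rcases mul_eq_zero.1 this with h | h
  · exact absurd h hne
  · linarith

theorem case1 {m n : ℕ} (N D : ℕ) (hD : DB N D) (S : Finset (Fin m → Fin n → ℤ))
    (i₁ i₂ i₃ : Fin m) (j₁ j₂ j₃ : Fin n)
    (hS : ∀ B ∈ S, Good N B ∧ B i₁ j₁ * B i₂ j₂ ≠ B i₁ j₂ * B i₂ j₁ ∧
      B i₁ j₁ * B i₂ j₃ ≠ B i₁ j₃ * B i₂ j₁ ∧ B i₁ j₂ * B i₂ j₃ ≠ B i₁ j₃ * B i₂ j₂ ∧
      B i₁ j₁ * B i₃ j₂ ≠ B i₃ j₁ * B i₁ j₂ ∧ B i₂ j₁ * B i₃ j₂ ≠ B i₃ j₁ * B i₂ j₂) :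
    S.card ≤ (((2 * D) * (2 * N)) ^ (n - 3) * ((2 * D) * (2 * N)) ^ (m - 2)) * (2 * N) ^ 6 := by
  classical
  rcases S.eq_empty_or_nonempty with h0 | ⟨B', hB'⟩
  · simp [h0]
  have hi : i₁ ≠ i₂ := by
    rintro rfl
    exact (hS B' hB').2.1 (by ring)
  have hj : j₁ ≠ j₂ := by
    rintro rfl
    exact (hS B' hB').2.1 (by ring)
  have hj1 : j₁ ≠ j₃ := by
    rintro rfl
    exact (hS B' hB').2.2.1 (by ring)
  have hj2 : j₂ ≠ j₃ := by
    rintro rfl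
    exact (hS B' hB').2.2.2.1 (by ring)
  clear hB' B'
  have hT : (((Bx N) ×ˢ (Bx N) ×ˢ (Bx N)) ×ˢ ((Bx N) ×ˢ (Bx N) ×ˢ (Bx N))).card = (2 * N) ^ 6 := by
    simp only [Finset.card_product, card_Bx]; ring
  rw [← hT]
  refine fiber_card S (fun B => ((B i₁ j₁, B i₁ j₂, B i₁ j₃), (B i₂ j₁, B i₂ j₂, B i₂ j₃))) _ _ ?_ ?_
  · intro B hB
    have := (hS B hB).1.1
    simp [this]
  intro B0 hB0
  obtain ⟨hg0, m1, m2, m3, m4, m5⟩ := hS B0 hB0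
  have hcm : Fintype.card (Fin m) - ({i₁, i₂} : Finset (Fin m)).card = m - 2 := by
    rw [Finset.card_pair hi, Fintype.card_fin]
  have hcn : Fintype.card (Fin n) - ({j₁, j₂, j₃} : Finset (Fin n)).card = n - 3 := by
    rw [Finset.card_eq_three.2 ⟨j₁, j₂, j₃, hj, hj1, hj2, rfl⟩, Fintype.card_fin]
  set T2 : Fin m → Finset (ℤ × ℤ × ℤ) := fun i => if i ∈ ({i₁, i₂} : Finset (Fin m)) then
    {(B0 i j₁, B0 i j₂, B0 i j₃)} else
    Rset N (B0 i₁ j₁) (B0 i₁ j₂) (B0 i₁ j₃) (B0 i₂ j₁) (B0 i₂ j₂) (B0 i₂ j₃) with hT2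
  have hT2c : (Fintype.piFinset T2).card ≤ ((2 * D) * (2 * N)) ^ (m - 2) := by
    rw [← hcm]
    refine pi_bound T2 _ _ (fun i hi => ?_) (fun i hi => ?_)
    · simp only [hT2, if_pos hi]; simp
    · simp only [hT2, if_neg hi]
      exact Rset_card N D hD _ _ _ _ _ _ (hg0.1 _ _) (hg0.1 _ _) (hg0.1 _ _) (hg0.1 _ _)
        (hg0.1 _ _) (hg0.1 _ _) m1 m2 m3
  refine le_trans ?_ (Nat.mul_le_mul_left _ hT2c)
  refine fiber_card _ (fun B i => (B i j₁, B i j₂, B i j₃)) _ _ ?_ ?_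
  · intro B hB
    rw [Finset.mem_filter] at hB
    obtain ⟨hBS, hBe⟩ := hB
    simp only [Prod.mk.injEq] at hBe
    obtain ⟨⟨a1, a2, a3⟩, a4, a5, a6⟩ := hBe
    have hg := (hS B hBS).1
    rw [Fintype.mem_piFinset]
    intro i
    simp only [hT2]
    split_ifs with h
    · rw [Finset.mem_insert, Finset.mem_singleton] at h
      rcases h with rfl | rfl
      · simp [a1, a2, a3]
      · simp [a4, a5, a6]
    · rw [Rset, Finset.mem_filter, ← a1, ← a2, ← a3, ← a4, ← a5, ← a6]
      exact ⟨by simp [hg.1], hg.2 _ _ _ _ _ _⟩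
  intro B1 hB1
  obtain ⟨hg1, m1, m2, m3, m4, m5⟩ := hS B1 (Finset.mem_filter.1 hB1).1
  set T3 : Fin n → Finset (ℤ × ℤ × ℤ) := fun j => if j ∈ ({j₁, j₂, j₃} : Finset (Fin n)) then
    {(B1 i₁ j, B1 i₂ j, B1 i₃ j)} else
    Rset N (B1 i₁ j₁) (B1 i₂ j₁) (B1 i₃ j₁) (B1 i₁ j₂) (B1 i₂ j₂) (B1 i₃ j₂) with hT3
  have hT3c : (Fintype.piFinset T3).card ≤ ((2 * D) * (2 * N)) ^ (n - 3) := by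
    rw [← hcn]
    refine pi_bound T3 _ _ (fun i hi => ?_) (fun i hi => ?_)
    · simp only [hT3, if_pos hi]; simp
    · simp only [hT3, if_neg hi]
      exact Rset_card N D hD _ _ _ _ _ _ (hg1.1 _ _) (hg1.1 _ _) (hg1.1 _ _) (hg1.1 _ _)
        (hg1.1 _ _) (hg1.1 _ _) (by rw [mul_comm (B1 i₂ j₁)]; exact m1) m4 m5
  refine le_trans ?_ hT3c
  refine Finset.card_le_card_of_injOn (fun B j => (B i₁ j, B i₂ j, B i₃ j)) ?_ ?_
  · intro B hB
    rw [Finset.mem_coe, Finset.mem_filter, Finset.mem_filter] at hB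
    have hBS := hB.1.1
    have hrow : ∀ i, B i j₁ = B1 i j₁ ∧ B i j₂ = B1 i j₂ ∧ B i j₃ = B1 i j₃ := by
      intro i
      have := congrFun hB.2 i
      simpa using this
    have hg := (hS B hBS).1
    rw [Finset.mem_coe, Fintype.mem_piFinset]
    intro j
    simp only [hT3]
    split_ifs with h
    · rw [Finset.mem_insert, Finset.mem_insert, Finset.mem_singleton] at h
      rcases h with rfl | rfl | rfl
      · simp [fun i => (hrow i).1]
      · simp [fun i => (hrow i).2.1]
      · simp [fun i => (hrow i).2.2]
    · rw [Rset, Finset.mem_filter]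
      refine ⟨by simp [hg.1], ?_⟩
      simp only [← (hrow _).1, ← (hrow _).2.1]
      rw [E9_transpose]
      exact hg.2 _ _ _ _ _ _
  · intro B hB C hC hBC
    rw [Finset.mem_coe, Finset.mem_filter, Finset.mem_filter] at hB hC
    have hrow : ∀ i, B i j₁ = C i j₁ ∧ B i j₂ = C i j₂ := by
      intro i
      have h1 := congrFun hB.2 i
      have h2 := congrFun hC.2 i
      have := h1.trans h2.symm
      simp at this
      exact ⟨this.1, this.2.1⟩
    have hcol : ∀ j, B i₁ j = C i₁ j ∧ B i₂ j = C i₂ j := by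
      intro j
      have := congrFun hBC j
      simp at this
      exact ⟨this.1, this.2.1⟩
    obtain ⟨hgB, mB, -⟩ := hS B hB.1.1
    obtain ⟨hgC, -⟩ := hS C hC.1.1
    funext i j
    have e1 := hgB.2 i₁ i₂ i j₁ j₂ j
    have e2 := hgC.2 i₁ i₂ i j₁ j₂ j
    simp only [← (hrow _).1, ← (hrow _).2, ← (hcol _).1, ← (hcol _).2] at e2
    have nz := fun i j => (mem_Bx.1 (hgB.1 i j)).1
    exact det_unique _ _ _ _ _ _ _ _ _ _ (nz _ _) (nz _ _) (nz _ _) (nz _ _) mB e1 e2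

theorem case2 {m n : ℕ} (N D : ℕ) (hD : DB N D) (S : Finset (Fin m → Fin n → ℤ))
    (i₁ i₂ i₃ : Fin m) (j₁ j₂ : Fin n) (h12 : i₁ ≠ i₂) (h13 : i₁ ≠ i₃) (h23 : i₂ ≠ i₃) (hj : j₁ ≠ j₂)
    (hS : ∀ B ∈ S, (∀ i j, B i j ∈ Bx N) ∧ (∀ j, B i₁ j₁ * B i₃ j = B i₁ j * B i₃ j₁) ∧
      ∀ i, (∀ j, B i₁ j₁ * B i j = B i₁ j * B i j₁) ∨ (∀ j, B i₂ j₁ * B i j = B i₂ j * B i j₁)) :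
    S.card ≤ (4 * N) ^ (m - 3) * (2 * N) ^ (n - 2) * ((2 * N) ^ n * ((2 * D) * (2 * N) ^ 2)) := by
  classical
  have hcm : Fintype.card (Fin m) - ({i₁, i₂, i₃} : Finset (Fin m)).card = m - 3 := by
    rw [Finset.card_eq_three.2 ⟨i₁, i₂, i₃, h12, h13, h23, rfl⟩, Fintype.card_fin]
  have hcn : Fintype.card (Fin n) - ({j₁, j₂} : Finset (Fin n)).card = n - 2 := by
    rw [Finset.card_pair hj, Fintype.card_fin]
  have hT : ((Fintype.piFinset (fun _ : Fin n => Bx N)) ×ˢ (Qset N)).card ≤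
      (2 * N) ^ n * ((2 * D) * (2 * N) ^ 2) := by
    rw [Finset.card_product, Fintype.card_piFinset]
    simp only [card_Bx, Finset.prod_const, Finset.card_univ, Fintype.card_fin]
    exact Nat.mul_le_mul_left _ (Qset_card N D hD)
  refine le_trans ?_ (Nat.mul_le_mul_left _ hT)
  refine fiber_card S (fun B => (B i₂, ((B i₁ j₁, B i₃ j₂), (B i₁ j₂, B i₃ j₁)))) _ _ ?_ ?_
  · intro B hB
    obtain ⟨h1, h2, -⟩ := hS B hB
    simp [h1, Qset, h2]
  intro B0 hB0
  obtain ⟨hb0, -⟩ := hS B0 hB0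
  set T3 : Fin n → Finset ℤ := fun j => if j ∈ ({j₁, j₂} : Finset (Fin n)) then {B0 i₁ j} else Bx N
    with hT3
  have hT3c : (Fintype.piFinset T3).card ≤ (2 * N) ^ (n - 2) := by
    rw [← hcn]
    refine pi_bound T3 _ _ (fun i hi => ?_) (fun i hi => ?_)
    · simp only [hT3, if_pos hi]; simp
    · simp only [hT3, if_neg hi]; rw [card_Bx]
  refine le_trans ?_ (Nat.mul_le_mul_left _ hT3c)
  refine fiber_card _ (fun B => B i₁) _ _ ?_ ?_
  · intro B hB
    rw [Finset.mem_filter] at hB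
    obtain ⟨hBS, hBe⟩ := hB
    simp only [Prod.mk.injEq] at hBe
    rw [Fintype.mem_piFinset]
    intro j
    simp only [hT3]
    split_ifs with h
    · rw [Finset.mem_insert, Finset.mem_singleton] at h
      rcases h with rfl | rfl
      · simp [hBe]
      · simp [hBe]
    · exact (hS B hBS).1 _ _
  intro B1 hB1
  rw [Finset.mem_filter] at hB1
  obtain ⟨hb1, -⟩ := hS B1 hB1.1
  set F : Fin m → Finset (Fin n → ℤ) := fun k => (Fintype.piFinset (fun _ : Fin n => Bx N)).filter
    (fun v => ∀ j, B1 k j₁ * v j = B1 k j * v j₁) with hF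
  have hFc : ∀ k, (F k).card ≤ 2 * N := by
    intro k
    rw [← card_Bx N]
    refine Finset.card_le_card_of_injOn (fun v => v j₁) ?_ ?_
    · intro v hv
      rw [Finset.mem_coe, hF, Finset.mem_filter, Fintype.mem_piFinset] at hv
      exact hv.1 j₁
    · intro v hv w hw hvw
      rw [Finset.mem_coe, hF, Finset.mem_filter, Fintype.mem_piFinset] at hv hw
      simp only at hvw
      funext j
      refine mul_left_cancel₀ (mem_Bx.1 (hb1 k j₁)).1 ?_
      rw [hv.2 j, hw.2 j, hvw]
  set T4 : Fin m → Finset (Fin n → ℤ) := fun i => if i ∈ ({i₁, i₂, i₃} : Finset (Fin m)) then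
    {B1 i} else F i₁ ∪ F i₂ with hT4
  have hT4c : (Fintype.piFinset T4).card ≤ (4 * N) ^ (m - 3) := by
    rw [← hcm]
    refine pi_bound T4 _ _ (fun i hi => ?_) (fun i hi => ?_)
    · simp only [hT4, if_pos hi]; simp
    · simp only [hT4, if_neg hi]
      refine (Finset.card_union_le _ _).trans ?_
      have := hFc i₁
      have := hFc i₂
      omega
  refine le_trans (Finset.card_le_card ?_) hT4c
  intro B hB
  rw [Finset.mem_filter, Finset.mem_filter] at hB
  obtain ⟨⟨hBS, hBe⟩, hB1e⟩ := hB
  have hBe' := hBe.trans hB1.2.symm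
  simp only [Prod.mk.injEq] at hBe'
  obtain ⟨hb, hp3, hp⟩ := hS B hBS
  obtain ⟨_, hp3', _⟩ := hS B1 hB1.1
  rw [Fintype.mem_piFinset]
  intro i
  simp only [hT4]
  split_ifs with h
  · rw [Finset.mem_singleton]
    rw [Finset.mem_insert, Finset.mem_insert, Finset.mem_singleton] at h
    rcases h with rfl | rfl | rfl
    · exact hB1e
    · exact hBe'.1
    · funext j
      refine mul_left_cancel₀ (mem_Bx.1 (hb1 i₁ j₁)).1 ?_
      rw [hp3', ← hB1e, hp3, hBe'.2.2.2]
  · rw [Finset.mem_union, hF, Finset.mem_filter, Finset.mem_filter, ← hB1e, ← hBe'.1,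
      Fintype.mem_piFinset]
    rcases hp i with h | h
    · left; exact ⟨hb i, h⟩
    · right; exact ⟨hb i, h⟩

/-- every row is proportional to row `i₁` or row `i₂`, and row `i₃` to row `i₁` -/
def C2 {m n : ℕ} (B : Fin m → Fin n → ℤ) (i₁ i₂ i₃ : Fin m) (j₁ j₂ : Fin n) : Prop :=
  i₁ ≠ i₂ ∧ i₁ ≠ i₃ ∧ i₂ ≠ i₃ ∧ j₁ ≠ j₂ ∧ (∀ j, B i₁ j₁ * B i₃ j = B i₁ j * B i₃ j₁) ∧
      ∀ i, (∀ j, B i₁ j₁ * B i j = B i₁ j * B i j₁) ∨ (∀ j, B i₂ j₁ * B i j = B i₂ j * B i j₁)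

theorem dich {m n N : ℕ} (hm : 3 ≤ m) (B : Fin m → Fin n → ℤ) (hg : Good N B) (i₁ i₂ : Fin m)
    (j₁ j₂ : Fin n) (h : B i₁ j₁ * B i₂ j₂ ≠ B i₁ j₂ * B i₂ j₁) :
    (∃ i₃, B i₁ j₁ * B i₃ j₂ ≠ B i₃ j₁ * B i₁ j₂ ∧ B i₂ j₁ * B i₃ j₂ ≠ B i₃ j₁ * B i₂ j₂) ∨
    ∃ k₁ k₂ k₃, C2 B k₁ k₂ k₃ j₁ j₂ := by
  by_cases hc : ∃ i₃, B i₁ j₁ * B i₃ j₂ ≠ B i₃ j₁ * B i₁ j₂ ∧ B i₂ j₁ * B i₃ j₂ ≠ B i₃ j₁ * B i₂ j₂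
  · exact Or.inl hc
  right
  have nz := fun i j => (mem_Bx.1 (hg.1 i j)).1
  have hi : i₁ ≠ i₂ := by
    rintro rfl
    exact h (by ring)
  have hj : j₁ ≠ j₂ := by
    rintro rfl
    exact h (by ring)
  have hall : ∀ i, (∀ j, B i₁ j₁ * B i j = B i₁ j * B i j₁) ∨
      (∀ j, B i₂ j₁ * B i j = B i₂ j * B i j₁) := by
    intro i
    by_cases h1 : B i₁ j₁ * B i j₂ = B i j₁ * B i₁ j₂
    · left
      intro j
      exact prop_of_minor _ _ _ _ _ _ _ _ _ (nz _ _) (nz i₂ j) (nz _ _) h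
        (by rw [h1, mul_comm]) (hg.2 i₁ i₂ i j₁ j₂ j)
    · right
      have h2 : B i₂ j₁ * B i j₂ = B i j₁ * B i₂ j₂ := by
        by_contra h2
        exact hc ⟨i, h1, h2⟩
      intro j
      exact prop_of_minor _ _ _ _ _ _ _ _ _ (nz _ _) (nz i₁ j) (nz _ _)
        (fun h' => h (by linarith)) (by rw [h2, mul_comm]) (hg.2 i₂ i₁ i j₁ j₂ j)
  obtain ⟨i₃, h3⟩ : ∃ i₃, i₃ ∉ ({i₁, i₂} : Finset (Fin m)) := by
    by_contra! hcon
    have h1 : (Finset.univ : Finset (Fin m)) ⊆ {i₁, i₂} := fun i _ => hcon i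
    have h2 := Finset.card_le_card h1
    rw [Finset.card_pair hi, Finset.card_univ, Fintype.card_fin] at h2
    omega
  simp only [Finset.mem_insert, Finset.mem_singleton, not_or] at h3
  rcases hall i₃ with h4 | h4
  · exact ⟨i₁, i₂, i₃, hi, fun h => h3.1 h.symm, fun h => h3.2 h.symm, hj, h4, hall⟩
  · exact ⟨i₂, i₁, i₃, hi.symm, fun h => h3.2 h.symm, fun h => h3.1 h.symm, hj, h4,
      fun i => (hall i).symm⟩

theorem good_transpose {m n N : ℕ} (B : Fin m → Fin n → ℤ) (hg : Good N B) :
    Good N (fun j i => B i j) :=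
  ⟨fun i j => hg.1 j i, fun i₁ i₂ i₃ j₁ j₂ j₃ => by
    rw [E9_transpose]; exact hg.2 _ _ _ _ _ _⟩

theorem total_bound {m n : ℕ} (hm : 3 ≤ m) (hn : 3 ≤ n) (N D : ℕ) (hD : DB N D)
    (S : Finset (Fin m → Fin n → ℤ))
    (hS : ∀ B ∈ S, Good N B ∧ ∃ i₁ i₂ j₁ j₂, B i₁ j₁ * B i₂ j₂ ≠ B i₁ j₂ * B i₂ j₁) :
    S.card ≤ Fintype.card (Fin m × Fin m × Fin m × Fin n × Fin n × Fin n) *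
        ((((2 * D) * (2 * N)) ^ (n - 3) * ((2 * D) * (2 * N)) ^ (m - 2)) * (2 * N) ^ 6) +
      Fintype.card (Fin m × Fin m × Fin m × Fin n × Fin n) *
        ((4 * N) ^ (m - 3) * (2 * N) ^ (n - 2) * ((2 * N) ^ n * ((2 * D) * (2 * N) ^ 2))) +
      Fintype.card (Fin n × Fin n × Fin n × Fin m × Fin m) *
        ((4 * N) ^ (n - 3) * (2 * N) ^ (m - 2) * ((2 * N) ^ m * ((2 * D) * (2 * N) ^ 2))) := by
  classical
  set S1 : Fin m × Fin m × Fin m × Fin n × Fin n × Fin n → Finset (Fin m → Fin n → ℤ) :=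
    fun ⟨i₁, i₂, i₃, j₁, j₂, j₃⟩ => S.filter (fun B => B i₁ j₁ * B i₂ j₂ ≠ B i₁ j₂ * B i₂ j₁ ∧
      B i₁ j₁ * B i₂ j₃ ≠ B i₁ j₃ * B i₂ j₁ ∧ B i₁ j₂ * B i₂ j₃ ≠ B i₁ j₃ * B i₂ j₂ ∧
      B i₁ j₁ * B i₃ j₂ ≠ B i₃ j₁ * B i₁ j₂ ∧ B i₂ j₁ * B i₃ j₂ ≠ B i₃ j₁ * B i₂ j₂) with hS1
  set S2 : Fin m × Fin m × Fin m × Fin n × Fin n → Finset (Fin m → Fin n → ℤ) :=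
    fun ⟨i₁, i₂, i₃, j₁, j₂⟩ => S.filter (fun B => C2 B i₁ i₂ i₃ j₁ j₂) with hS2
  set S3 : Fin n × Fin n × Fin n × Fin m × Fin m → Finset (Fin m → Fin n → ℤ) :=
    fun ⟨i₁, i₂, i₃, j₁, j₂⟩ => S.filter (fun B => C2 (fun j i => B i j) i₁ i₂ i₃ j₁ j₂) with hS3
  have hcov : S ⊆ Finset.univ.biUnion S1 ∪ Finset.univ.biUnion S2 ∪ Finset.univ.biUnion S3 := by
    intro B hB
    obtain ⟨hg, i₁, i₂, j₁, j₂, h⟩ := hS B hB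
    simp only [Finset.mem_union, Finset.mem_biUnion, Finset.mem_univ, true_and]
    rcases dich hm B hg i₁ i₂ j₁ j₂ h with ⟨i₃, h1, h2⟩ | ⟨k₁, k₂, k₃, h1⟩
    · rcases dich hn _ (good_transpose B hg) j₁ j₂ i₁ i₂
        (by rw [mul_comm (B i₂ j₁)]; exact h) with ⟨j₃, h3, h4⟩ | ⟨k₁, k₂, k₃, h3⟩
      · left; left
        exact ⟨(i₁, i₂, i₃, j₁, j₂, j₃), Finset.mem_filter.2 ⟨hB, h, h3, h4, h1, h2⟩⟩
      · right
        exact ⟨(k₁, k₂, k₃, i₁, i₂), Finset.mem_filter.2 ⟨hB, h3⟩⟩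
    · left; right
      exact ⟨(k₁, k₂, k₃, j₁, j₂), Finset.mem_filter.2 ⟨hB, h1⟩⟩
  refine (Finset.card_le_card hcov).trans ?_
  refine (Finset.card_union_le _ _).trans (add_le_add ((Finset.card_union_le _ _).trans
    (add_le_add ?_ ?_)) ?_)
  · refine Finset.card_biUnion_le_card_mul _ _ _ ?_
    rintro ⟨i₁, i₂, i₃, j₁, j₂, j₃⟩ -
    refine case1 N D hD _ i₁ i₂ i₃ j₁ j₂ j₃ fun B hB => ?_
    have := Finset.mem_filter.1 hB
    exact ⟨(hS B this.1).1, this.2⟩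
  · refine Finset.card_biUnion_le_card_mul _ _ _ ?_
    rintro ⟨i₁, i₂, i₃, j₁, j₂⟩ -
    rcases (S2 (i₁, i₂, i₃, j₁, j₂)).eq_empty_or_nonempty with h0 | ⟨B, hB⟩
    · rw [h0]; simp
    obtain ⟨a1, a2, a3, a4, -⟩ := (Finset.mem_filter.1 hB).2
    refine case2 N D hD _ i₁ i₂ i₃ j₁ j₂ a1 a2 a3 a4 fun B hB => ?_
    have := Finset.mem_filter.1 hB
    exact ⟨(hS B this.1).1.1, this.2.2.2.2.2⟩
  · refine Finset.card_biUnion_le_card_mul _ _ _ ?_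
    rintro ⟨i₁, i₂, i₃, j₁, j₂⟩ -
    rcases (S3 (i₁, i₂, i₃, j₁, j₂)).eq_empty_or_nonempty with h0 | ⟨B, hB⟩
    · rw [h0]; simp
    obtain ⟨a1, a2, a3, a4, -⟩ := (Finset.mem_filter.1 hB).2
    have hinj : Function.Injective (fun (B : Fin m → Fin n → ℤ) (j : Fin n) (i : Fin m) => B i j) := by
      intro B C h
      funext i j
      exact congrFun (congrFun h j) i
    rw [← Finset.card_image_of_injective _ hinj]
    refine case2 N D hD _ i₁ i₂ i₃ j₁ j₂ a1 a2 a3 a4 fun B hB => ?_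
    obtain ⟨B', hB', rfl⟩ := Finset.mem_image.1 hB
    have := Finset.mem_filter.1 hB'
    exact ⟨fun i j => (hS B' this.1).1.1 j i, this.2.2.2.2.2⟩

theorem main_bound (m n e : ℕ) (hm : 3 ≤ m) (hn : 3 ≤ n) (he1 : m + n + 1 ≤ e)
    (he2 : 2 * n + m - 3 ≤ e) (he3 : 2 * m + n - 3 ≤ e) (ε : ℝ) (hε : 0 < ε) :
    ∃ C : ℝ, ∀ H : ℝ, 2 ≤ H →
      (Set.ncard {A : Matrix (Fin m) (Fin n) ℚ |
            (∀ i j, A i j ∈ Egyptian H) ∧ A.rank = 2} : ℝ) ≤ C * H ^ ((e : ℝ) + ε) := by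
  classical
  have hmn : (0 : ℝ) < (m + n : ℕ) := by exact_mod_cast (by omega : 0 < m + n)
  set δ : ℝ := ε / (10 * (m + n : ℕ)) with hδ
  have hδ0 : 0 < δ := by positivity
  obtain ⟨C, hC1, hC⟩ := divisor_bound δ hδ0
  set c : ℝ := C * 4 ^ δ with hc
  have hc0 : 0 ≤ c := by positivity
  set M1 : ℝ := (Fintype.card (Fin m × Fin m × Fin m × Fin n × Fin n × Fin n) : ℝ)
  set M2 : ℝ := (Fintype.card (Fin m × Fin m × Fin m × Fin n × Fin n) : ℝ)
  set M3 : ℝ := (Fintype.card (Fin n × Fin n × Fin n × Fin m × Fin m) : ℝ)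
  refine ⟨M1 * ((4 * c) ^ (m + n - 5) * 64) + M2 * (4 ^ (m - 3) * 2 ^ (n - 2) * 2 ^ n * 8 * c)
    + M3 * (4 ^ (n - 3) * 2 ^ (m - 2) * 2 ^ m * 8 * c), fun H hH => ?_⟩
  have hH0 : 0 < H := by linarith
  have hH1 : 1 ≤ H := by linarith
  set N : ℕ := ⌊H⌋₊ with hN
  have hNH : (N : ℝ) ≤ H := Nat.floor_le hH0.le
  set Y : ℝ := H ^ (10 * δ) with hY
  have hY1 : 1 ≤ Y := Real.one_le_rpow hH1 (by positivity)
  have hYe : Y ^ (m + n) = H ^ ε := by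
    rw [hY, ← Real.rpow_natCast, ← Real.rpow_mul hH0.le]
    congr 1
    rw [hδ]; field_simp
  set D : ℕ := ⌊c * Y⌋₊ with hD
  have hDY : (D : ℝ) ≤ c * Y := Nat.floor_le (by positivity)
  have hDB : DB N D := by
    intro k hk hkN
    rw [hD]
    refine Nat.le_floor ((hC k hk).trans ?_)
    have h1 : (k : ℝ) ≤ 4 * H ^ 10 := by
      calc (k : ℝ) ≤ 4 * (N : ℝ) ^ 10 := by exact_mod_cast hkN
        _ ≤ 4 * H ^ 10 := by gcongr
    calc C * (k : ℝ) ^ δ ≤ C * (4 * H ^ 10) ^ δ := by gcongr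
      _ = c * Y := by
        rw [Real.mul_rpow (by norm_num) (by positivity), hc, hY, Real.rpow_mul hH0.le]
        norm_num
        ring
  set S : Finset (Fin m → Fin n → ℤ) :=
    (Fintype.piFinset (fun _ : Fin m => Fintype.piFinset (fun _ : Fin n => Bx N))).filter
      (fun B => Good N B ∧ ∃ i₁ i₂ j₁ j₂, B i₁ j₁ * B i₂ j₂ ≠ B i₁ j₂ * B i₂ j₁) with hS
  have hcard : Set.ncard {A : Matrix (Fin m) (Fin n) ℚ |
            (∀ i j, A i j ∈ Egyptian H) ∧ A.rank = 2} ≤ S.card := by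
    have hsub : {A : Matrix (Fin m) (Fin n) ℚ | (∀ i j, A i j ∈ Egyptian H) ∧ A.rank = 2} ⊆
        ((S.image (fun B => (Matrix.of (fun i j => 1 / (B i j : ℚ)) :
          Matrix (Fin m) (Fin n) ℚ)) : Finset _) : Set (Matrix (Fin m) (Fin n) ℚ)) := by
      rintro A ⟨hA, hr⟩
      choose B hB using hA
      have hA' : A = Matrix.of (fun i j => 1 / (B i j : ℚ)) := by
        ext i j; exact (hB i j).2.2
      have hbox : ∀ i j, B i j ∈ Bx N := fun i j => by
        refine mem_Bx.2 ⟨(hB i j).1, ?_⟩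
        have h1 := (hB i j).2.1
        have h2 : (((B i j).natAbs : ℕ) : ℝ) ≤ H := by
          rw [Nat.cast_natAbs]; push_cast; exact h1
        have h3 : (B i j).natAbs ≤ N := Nat.le_floor h2
        rw [Int.abs_eq_natAbs]
        exact_mod_cast h3
      rw [hA'] at hr
      rw [Finset.mem_coe, Finset.mem_image]
      refine ⟨B, Finset.mem_filter.2 ⟨?_, good_of_rank N B hbox hr⟩, hA'.symm⟩
      simp only [Fintype.mem_piFinset]
      exact hbox
    refine (Set.ncard_le_ncard hsub (Finset.finite_toSet _)).trans ?_
    rw [Set.ncard_coe_finset]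
    exact Finset.card_image_le
  have htot := hcard.trans (total_bound hm hn N D hDB S (fun B hB => (Finset.mem_filter.1 hB).2))
  have htot' := (Nat.cast_le (α := ℝ)).2 htot
  refine htot'.trans ?_
  push_cast
  rw [Real.rpow_add hH0, Real.rpow_natCast, ← hYe]
  have hZ : ∀ a b : ℕ, a ≤ m + n → b ≤ e → Y ^ a * H ^ b ≤ H ^ e * Y ^ (m + n) := by
    intro a b ha hb
    rw [mul_comm]
    gcongr <;> assumption
  rw [add_mul, add_mul]
  have case2' : ∀ p q : ℕ, 3 ≤ p → 3 ≤ q → 2 * q + p - 3 ≤ e →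
      (4 * (N : ℝ)) ^ (p - 3) * (2 * N) ^ (q - 2) * ((2 * N) ^ q * ((2 * D) * (2 * N) ^ 2)) ≤
      (4 ^ (p - 3) * 2 ^ (q - 2) * 2 ^ q * 8 * c) * (H ^ e * Y ^ (m + n)) := by
    intro p q hp hq hpq
    calc (4 * (N : ℝ)) ^ (p - 3) * (2 * N) ^ (q - 2) * ((2 * N) ^ q * ((2 * D) * (2 * N) ^ 2))
        ≤ (4 * H) ^ (p - 3) * (2 * H) ^ (q - 2) * ((2 * H) ^ q * ((2 * (c * Y)) * (2 * H) ^ 2)) := by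
          gcongr
      _ = (4 ^ (p - 3) * 2 ^ (q - 2) * 2 ^ q * 8 * c) * (Y ^ 1 * H ^ (2 * q + p - 3)) := by
          have : 2 * q + p - 3 = (p - 3) + (q - 2) + q + 2 := by omega
          rw [this]
          simp only [mul_pow, pow_add]
          ring
      _ ≤ _ := mul_le_mul_of_nonneg_left (hZ _ _ (by omega) hpq) (by positivity)
  refine add_le_add (add_le_add ?_ ?_) ?_
  · rw [mul_assoc M1]
    refine mul_le_mul (le_of_eq (by simp [M1])) ?_ (by positivity) (by positivity)
    calc ((2 * (D : ℝ) * (2 * N)) ^ (n - 3) * (2 * D * (2 * N)) ^ (m - 2)) * (2 * N) ^ 6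
        ≤ ((2 * (c * Y) * (2 * H)) ^ (n - 3) * (2 * (c * Y) * (2 * H)) ^ (m - 2)) * (2 * H) ^ 6 := by
          gcongr
      _ = ((4 * c) ^ (m + n - 5) * 64) * (Y ^ (m + n - 5) * H ^ (m + n + 1)) := by
          rw [← pow_add]
          have h1 : n - 3 + (m - 2) = m + n - 5 := by omega
          have h2 : m + n + 1 = (m + n - 5) + 6 := by omega
          rw [h1, h2, pow_add, show 2 * (c * Y) * (2 * H) = (4 * c) * Y * H by ring, mul_pow _ H,
            mul_pow _ Y]
          ring
      _ ≤ _ := mul_le_mul_of_nonneg_left (hZ _ _ (by omega) he1) (by positivity)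
  · rw [mul_assoc M2]
    exact mul_le_mul (le_of_eq (by simp [M2])) (case2' m n hm hn he2) (by positivity) (by positivity)
  · rw [mul_assoc M3]
    exact mul_le_mul (le_of_eq (by simp [M3])) (case2' n m hn hm he3) (by positivity) (by positivity)

theorem stmt9 (m n : ℕ) (hnm : n ≥ m) (hm : m > 2) :
    ∀ ε > (0 : ℝ), ∃ C : ℝ, ∀ H : ℝ, H ≥ 2 →
      ((m, n) = (3, 3) →
        (Set.ncard {A : Matrix (Fin m) (Fin n) ℚ |
            (∀ i j, A i j ∈ Egyptian H) ∧ A.rank = 2} : ℝ) ≤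
          C * H ^ ((7 : ℝ) + ε)) ∧
      ((m, n) ≠ (3, 3) →
        (Set.ncard {A : Matrix (Fin m) (Fin n) ℚ |
            (∀ i j, A i j ∈ Egyptian H) ∧ A.rank = 2} : ℝ) ≤
          C * H ^ ((2 * n + m : ℝ) - 3 + ε)) := by
  intro ε hε
  by_cases h : (m, n) = (3, 3)
  · have h' := h
    rw [Prod.mk.injEq] at h'
    obtain ⟨C, hC⟩ := main_bound m n 7 (by omega) (by omega) (by omega) (by omega) (by omega) ε hε
    refine ⟨C, fun H hH => ⟨fun _ => ?_, fun h2 => absurd h h2⟩⟩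
    have := hC H hH
    exact_mod_cast this
  · have h' := h
    rw [Prod.mk.injEq] at h'
    obtain ⟨C, hC⟩ := main_bound m n (2 * n + m - 3) (by omega) (by omega) (by omega) (by omega)
      (by omega) ε hε
    refine ⟨C, fun H hH => ⟨fun h2 => absurd h2 h, fun _ => ?_⟩⟩
    have := hC H hH
    rw [Nat.cast_sub (by omega)] at this
    push_cast at this
    exact this
end
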